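/- arXiv:2412.13080 — 4 statements merged into one kernel-verified Lean document; each statement's English description precedes it below -/
import Mathlib

section
/- Let p ∈ (2, ∞). There exists a constant C_p > 0 (depending only on p) such that for every R ≥ 0 and every u ∈ H¹(ℝ², ℂ) one has ‖K_R ∗ |u|²‖_p ≤ C_p ‖u‖_{H¹}², where K_R ∗ |u|² is the (componentwise) convolution of the kernel K_R with the density |u|². -/
noncomputable section
open MeasureTheory ENNReal
open scoped RealInnerProductSpace

/-- The plane `ℝ²`. -/
abbrev E2 : Type := EuclideanSpace ℝ (Fin 2)

/-- The rotation by 90 degrees: `x^⊥ = (-x₂, x₁)`. -/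
def perp (x : E2) : E2 := (WithLp.equiv 2 (Fin 2 → ℝ)).symm ![-(x 1), x 0]

/-- The Aharonov–Bohm kernel `K_R(x) = x^⊥ / (max R ‖x‖)²` (with `K_R 0 = 0`,
also when `R = 0`, by the junk-value convention `(0 : ℝ)⁻¹ = 0`). -/
def K (R : ℝ) (x : E2) : E2 := ((max R ‖x‖) ^ 2)⁻¹ • perp x

/-- The standard basis of `ℝ²`. -/
def e2 (j : Fin 2) : E2 := EuclideanSpace.single j 1

/-- Componentwise convolution of the vector kernel `K_R` with a scalar density. -/
def convKs (R : ℝ) (ρ : E2 → ℝ) (x : E2) : E2 := ∫ y, ρ y • K R (x - y)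

/-- Convolution of the vector kernel `K_R` with a vector field, summed over components. -/
def convKv (R : ℝ) (F : E2 → E2) (x : E2) : ℝ := ∫ y, ⟪K R (x - y), F y⟫

/-- The current `J[u] = i(u∇ū - ū∇u) = 2 Im(ū ∇u)`, an `ℝ²`-valued function. -/
def Jf (u : E2 → ℂ) (x : E2) : E2 :=
  (WithLp.equiv 2 (Fin 2 → ℝ)).symm fun j =>
    2 * ((starRingEnd ℂ) (u x) * fderiv ℝ u x (e2 j)).im

/-- The `H¹` norm `(‖u‖₂² + ‖∇u‖₂²)^{1/2}` (extended-real valued). -/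
def H1 (u : E2 → ℂ) : ℝ≥0∞ :=
  (eLpNorm u 2 volume ^ 2 + eLpNorm (fun x => fderiv ℝ u x) 2 volume ^ 2) ^ (1 / 2 : ℝ)

/-- The `H²` norm `(‖u‖₂² + ‖∇u‖₂² + ‖∇²u‖₂²)^{1/2}` (extended-real valued). -/
def H2 (u : E2 → ℂ) : ℝ≥0∞ :=
  (eLpNorm u 2 volume ^ 2 + eLpNorm (fun x => fderiv ℝ u x) 2 volume ^ 2
    + eLpNorm (fun x => fderiv ℝ (fderiv ℝ u) x) 2 volume ^ 2) ^ (1 / 2 : ℝ)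


lemma young_aux (k ρ : E2 → ℝ≥0∞) (hk : Measurable k) (hρ : Measurable ρ) (p s q : ℝ)
    (hs : 0 < s) (hq : 0 < q) (hsp : s ≤ p) (hqp : q ≤ p) (h : 1 / s + 1 / q = 1 + 1 / p) :
    (∫⁻ x, (∫⁻ y, ρ y * k (x - y)) ^ p) ^ (1 / p)
      ≤ (∫⁻ x, k x ^ s) ^ (1 / s) * (∫⁻ x, ρ x ^ q) ^ (1 / q) := by
  have hp : 0 < p := hs.trans_le hsp
  set S := ∫⁻ x, k x ^ s with hS
  set Q := ∫⁻ x, ρ x ^ q with hQ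
  have ha : 0 ≤ 1 / s - 1 / p := sub_nonneg.2 (one_div_le_one_div_of_le hs hsp)
  have hb : 0 ≤ 1 / q - 1 / p := sub_nonneg.2 (one_div_le_one_div_of_le hq hqp)
  have hp' : 0 ≤ 1 / p := by positivity
  have split : ∀ (z : ℝ≥0∞) (t : ℝ), 0 < t → 0 ≤ 1 / t - 1 / p →
      (z ^ t) ^ (1 / p) * (z ^ t) ^ (1 / t - 1 / p) = z := by
    intro z t ht h0
    rw [← ENNReal.rpow_add_of_nonneg _ _ hp' h0, ← ENNReal.rpow_mul]
    have : t * (1 / p + (1 / t - 1 / p)) = 1 := by field_simp; ring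
    rw [this, ENNReal.rpow_one]
  have pt : ∀ x, ∫⁻ y, ρ y * k (x - y) ≤
      (∫⁻ y, k (x - y) ^ s * ρ y ^ q) ^ (1 / p) * S ^ (1 / s - 1 / p) * Q ^ (1 / q - 1 / p) := by
    intro x
    have hkx : Measurable fun y => k (x - y) := hk.comp (measurable_const.sub measurable_id)
    have H := ENNReal.lintegral_prod_norm_pow_le (μ := (volume : Measure E2))
      (Finset.univ : Finset (Fin 3))
      (f := ![fun y => k (x - y) ^ s * ρ y ^ q, fun y => k (x - y) ^ s, fun y => ρ y ^ q])
      (p := ![1 / p, 1 / s - 1 / p, 1 / q - 1 / p]) (by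
        intro i _
        fin_cases i
        · exact ((hkx.pow_const s).mul (hρ.pow_const q)).aemeasurable
        · exact (hkx.pow_const s).aemeasurable
        · exact (hρ.pow_const q).aemeasurable)
      (by simp [Fin.sum_univ_three] at h ⊢; linarith)
      (by
        intro i _
        fin_cases i
        · exact hp'
        · exact ha
        · exact hb)
    simp only [Fin.prod_univ_three, Matrix.cons_val_zero, Matrix.cons_val_one,
      Matrix.cons_val] at H
    rw [lintegral_sub_left_eq_self (fun y => k y ^ s) x] at H
    refine le_trans (le_of_eq ?_) H
    refine lintegral_congr fun y => ?_
    rw [ENNReal.mul_rpow_of_nonneg _ _ hp']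
    calc ρ y * k (x - y) = ((ρ y ^ q) ^ (1 / p) * (ρ y ^ q) ^ (1 / q - 1 / p)) *
          ((k (x - y) ^ s) ^ (1 / p) * (k (x - y) ^ s) ^ (1 / s - 1 / p)) := by
            rw [split _ q hq hb, split _ s hs ha]
      _ = _ := by ring
  have hmeas2 : Measurable (Function.uncurry fun x y : E2 => k (x - y) ^ s * ρ y ^ q) := by
    refine Measurable.mul ((hk.comp (measurable_fst.sub measurable_snd)).pow_const s) ?_
    exact (hρ.comp measurable_snd).pow_const q
  have I : ∫⁻ x, ∫⁻ y, k (x - y) ^ s * ρ y ^ q = S * Q := by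
    rw [lintegral_lintegral_swap hmeas2.aemeasurable]
    calc ∫⁻ y, ∫⁻ x, k (x - y) ^ s * ρ y ^ q = ∫⁻ y, S * ρ y ^ q := by
          refine lintegral_congr fun y => ?_
          have hky : Measurable fun x => k (x - y) := hk.comp (measurable_id.sub measurable_const)
          rw [lintegral_mul_const _ (hky.pow_const s)]
          rw [lintegral_sub_right_eq_self (fun x => k x ^ s) y]
      _ = S * Q := lintegral_const_mul _ (hρ.pow_const q)
  have fin : ∀ (z : ℝ≥0∞) (t : ℝ), 0 ≤ 1 / t - 1 / p →
      z ^ (1 / p) * z ^ (1 / t - 1 / p) = z ^ (1 / t) := by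
    intro z t h0
    rw [← ENNReal.rpow_add_of_nonneg _ _ hp' h0]; congr 1; ring
  calc (∫⁻ x, (∫⁻ y, ρ y * k (x - y)) ^ p) ^ (1 / p)
      ≤ (∫⁻ x, (∫⁻ y, k (x - y) ^ s * ρ y ^ q) *
          (S ^ (1 / s - 1 / p) * Q ^ (1 / q - 1 / p)) ^ p) ^ (1 / p) := by
        refine ENNReal.rpow_le_rpow (lintegral_mono fun x => ?_) hp'
        refine (ENNReal.rpow_le_rpow (pt x) hp.le).trans (le_of_eq ?_)
        rw [mul_assoc, ENNReal.mul_rpow_of_nonneg _ _ hp.le, ← ENNReal.rpow_mul,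
          one_div_mul_cancel hp.ne', ENNReal.rpow_one]
    _ = (S * Q) ^ (1 / p) * (S ^ (1 / s - 1 / p) * Q ^ (1 / q - 1 / p)) := by
        rw [lintegral_mul_const _ hmeas2.lintegral_prod_right, I,
          ENNReal.mul_rpow_of_nonneg _ _ hp', ← ENNReal.rpow_mul,
          mul_one_div_cancel hp.ne', ENNReal.rpow_one]
    _ = S ^ (1 / s) * Q ^ (1 / q) := by
        rw [ENNReal.mul_rpow_of_nonneg _ _ hp', ← fin S s ha, ← fin Q q hb]; ring

/-- Near part of the kernel. -/
def kn (x : E2) : ℝ≥0∞ := (Metric.ball (0 : E2) 1).indicator (fun x => ENNReal.ofReal (‖x‖⁻¹)) x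
/-- Far part of the kernel. -/
def kf (x : E2) : ℝ≥0∞ := (Metric.ball (0 : E2) 1)ᶜ.indicator (fun x => ENNReal.ofReal (‖x‖⁻¹)) x

lemma kn_meas : Measurable kn :=
  Measurable.indicator (by fun_prop) Metric.isOpen_ball.measurableSet
lemma kf_meas : Measurable kf :=
  Measurable.indicator (by fun_prop) Metric.isOpen_ball.measurableSet.compl

lemma kn_fin (s : ℝ) (h0 : 0 < s) (h : s < 2) : ∫⁻ x, kn x ^ s < ⊤ := by
  have H : IntegrableOn (fun x : E2 => ‖x‖ ^ (-s)) (Metric.ball 0 1) volume := by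
    refine integrableOn_ball_of_norm_le_rpow (C := 1) (α := s) (by simp) (by simpa using h) ?_ ?_
    · refine Filter.Eventually.of_forall fun x => ?_
      rw [one_mul, Real.norm_of_nonneg (by positivity)]
    · exact (by fun_prop : Measurable fun x : E2 => ‖x‖ ^ (-s)).aestronglyMeasurable
  have H2 := H.2
  rw [hasFiniteIntegral_iff_ofReal (Filter.Eventually.of_forall fun x => by positivity)] at H2
  refine lt_of_le_of_lt ?_ H2
  rw [← lintegral_indicator Metric.isOpen_ball.measurableSet]
  refine lintegral_mono fun x => ?_
  unfold kn
  by_cases hx : x ∈ Metric.ball (0 : E2) 1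
  · simp only [Set.indicator_of_mem hx]
    rw [ENNReal.ofReal_rpow_of_nonneg (by positivity) h0.le, Real.inv_rpow (norm_nonneg _),
      Real.rpow_neg (norm_nonneg _)]
  · simp [Set.indicator_of_notMem hx, h0]

lemma kf_fin (p : ℝ) (h : 2 < p) : ∫⁻ x, kf x ^ p < ⊤ := by
  have h0 : 0 < p := by linarith
  have H := finite_integral_one_add_norm (E := E2) (μ := volume) (r := p) (by simpa using h)
  have H2 : ∫⁻ x : E2, ENNReal.ofReal (2 ^ p) * ENNReal.ofReal ((1 + ‖x‖) ^ (-p)) < ⊤ := by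
    rw [lintegral_const_mul _ (by fun_prop)]
    exact ENNReal.mul_lt_top ENNReal.ofReal_lt_top H
  refine lt_of_le_of_lt (lintegral_mono fun x => ?_) H2
  unfold kf
  by_cases hx : x ∈ (Metric.ball (0 : E2) 1)ᶜ
  · simp only [Set.indicator_of_mem hx]
    have hx1 : 1 ≤ ‖x‖ := by simpa using hx
    rw [ENNReal.ofReal_rpow_of_nonneg (by positivity) h0.le, ← ENNReal.ofReal_mul (by positivity)]
    refine ENNReal.ofReal_le_ofReal ?_
    rw [Real.rpow_neg (by positivity), ← Real.inv_rpow (by positivity),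
      ← Real.mul_rpow (by positivity) (by positivity)]
    refine Real.rpow_le_rpow (by positivity) ?_ h0.le
    rw [← div_eq_mul_inv, inv_eq_one_div, div_le_div_iff₀ (by linarith) (by linarith)]
    linarith
  · simp [Set.indicator_of_notMem hx, h0]

lemma K_le (R : ℝ) (x : E2) : ‖K R x‖ₑ ≤ kn x + kf x := by
  have e : kn x + kf x = ENNReal.ofReal (‖x‖⁻¹) := by
    unfold kn kf
    exact congrFun (Set.indicator_self_add_compl (Metric.ball (0 : E2) 1)
      (fun x => ENNReal.ofReal (‖x‖⁻¹))) x
  rw [e, ← ofReal_norm]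
  refine ENNReal.ofReal_le_ofReal ?_
  have hperp : ‖perp x‖ = ‖x‖ := by
    simp [perp, EuclideanSpace.norm_eq, Fin.sum_univ_two, add_comm]
  rcases eq_or_ne x 0 with rfl | hx
  · have : ‖perp 0‖ = 0 := by rw [hperp]; simp
    rw [K, norm_smul, this]; simp
  have hx' : 0 < ‖x‖ := norm_pos_iff.2 hx
  rw [K, norm_smul, hperp, Real.norm_of_nonneg (by positivity)]
  have : ((max R ‖x‖) ^ 2)⁻¹ ≤ (‖x‖ ^ 2)⁻¹ := by
    gcongr
    exact le_max_right _ _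
  calc _ ≤ (‖x‖ ^ 2)⁻¹ * ‖x‖ := by gcongr
    _ = ‖x‖⁻¹ := by field_simp

lemma line_aux (h : ℝ → ℝ) (hd : Differentiable ℝ h) (D : ℝ → ℝ≥0∞)
    (hD : ∀ t, ‖deriv h t‖ₑ ≤ D t) (hfin : ∫⁻ t, ‖h t‖ₑ < ⊤) (s : ℝ) :
    ‖h s‖ₑ ≤ ∫⁻ t, D t := by
  by_cases hDf : ∫⁻ t, D t = ⊤
  · rw [hDf]; exact le_top
  have hi : Integrable h := ⟨hd.continuous.aestronglyMeasurable, hfin⟩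
  have hi' : Integrable (deriv h) :=
    ⟨(stronglyMeasurable_deriv h).aestronglyMeasurable,
      lt_of_le_of_lt (lintegral_mono hD) (lt_top_iff_ne_top.2 hDf)⟩
  have hda : ∀ x ∈ Set.Iic s, HasDerivAt h (deriv h x) x := fun x _ => (hd x).hasDerivAt
  have T := tendsto_zero_of_hasDerivAt_of_integrableOn_Iic hda hi'.integrableOn hi.integrableOn
  have E := integral_Iic_of_hasDerivAt_of_tendsto' hda hi'.integrableOn T
  rw [sub_zero] at E
  rw [← E]
  calc _ ≤ ∫⁻ t in Set.Iic s, ‖deriv h t‖ₑ := enorm_integral_le_lintegral_enorm _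
    _ ≤ ∫⁻ t, ‖deriv h t‖ₑ := setLIntegral_le_lintegral _ _
    _ ≤ _ := lintegral_mono hD

lemma line_u (u : E2 → ℂ) (hu : Differentiable ℝ u) (b e : E2) (he : ‖e‖ ≤ 1)
    (hfin : ∫⁻ t : ℝ, ‖u (b + t • e)‖ₑ ^ 2 < ⊤) (s : ℝ) :
    ‖u (b + s • e)‖ₑ ^ 2 ≤
      ∫⁻ t : ℝ, 2 * (‖u (b + t • e)‖ₑ * ‖fderiv ℝ u (b + t • e)‖ₑ) := by
  have hv : ∀ t : ℝ, HasDerivAt (fun t : ℝ => u (b + t • e)) (fderiv ℝ u (b + t • e) e) t := by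
    intro t
    have h1 : HasDerivAt (fun t : ℝ => b + t • e) e t := by
      simpa using ((hasDerivAt_id t).smul_const e).const_add b
    exact (hu (b + t • e)).hasFDerivAt.comp_hasDerivAt t h1
  have hh : ∀ t : ℝ, HasDerivAt (fun t : ℝ => ‖u (b + t • e)‖ ^ 2)
      (2 * inner ℝ (u (b + t • e)) (fderiv ℝ u (b + t • e) e)) t := fun t => (hv t).norm_sq
  have en : ∀ z : ℂ, ‖(‖z‖ ^ 2 : ℝ)‖ₑ = ‖z‖ₑ ^ 2 := by
    intro z; rw [enorm_pow, enorm_norm]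
  have H := line_aux (fun t : ℝ => ‖u (b + t • e)‖ ^ 2) (fun t => (hh t).differentiableAt)
    (fun t => 2 * (‖u (b + t • e)‖ₑ * ‖fderiv ℝ u (b + t • e)‖ₑ)) (by
      intro t
      rw [(hh t).deriv, enorm_mul]
      have h2 : ‖(2 : ℝ)‖ₑ = 2 := by
        rw [Real.enorm_eq_ofReal (by norm_num)]; simp
      rw [h2]
      gcongr
      rw [← ofReal_norm, ← ofReal_norm, ← ofReal_norm, ← ENNReal.ofReal_mul (norm_nonneg _)]
      refine ENNReal.ofReal_le_ofReal ((norm_inner_le_norm _ _).trans ?_)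
      gcongr
      exact ((fderiv ℝ u (b + t • e)).le_opNorm e).trans
        (mul_le_of_le_one_right (norm_nonneg _) he)) (by simpa only [en] using hfin) s
  simpa only [en] using H

/-- Coordinates on the plane. -/
def phi (z : ℝ × ℝ) : E2 := WithLp.toLp 2 (MeasurableEquiv.finTwoArrow.symm z)

lemma phi_mp : MeasurePreserving phi volume volume :=
  (PiLp.volume_preserving_toLp (Fin 2)).comp
    ((volume_preserving_finTwoArrow ℝ).symm MeasurableEquiv.finTwoArrow)

lemma phi_eq (s t : ℝ) : phi (s, t) = t • e2 1 + s • e2 0 := by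
  ext i
  fin_cases i <;> simp [phi, e2, MeasurableEquiv.finTwoArrow]

lemma phi_eq' (s t : ℝ) : phi (s, t) = s • e2 0 + t • e2 1 := by
  rw [phi_eq, add_comm]

lemma gn (u : E2 → ℂ) (hu : Differentiable ℝ u) (hfin : ∫⁻ x, ‖u x‖ₑ ^ 2 < ⊤) :
    ∫⁻ x, (‖u x‖ₑ ^ 2) ^ 2 ≤ (∫⁻ x, 2 * (‖u x‖ₑ * ‖fderiv ℝ u x‖ₑ)) ^ 2 := by
  have mu : Measurable fun x => ‖u x‖ₑ := hu.continuous.measurable.enorm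
  have mF : Measurable fun x => ‖u x‖ₑ ^ 2 := mu.pow_const 2
  have mD : Measurable fun x => 2 * (‖u x‖ₑ * ‖fderiv ℝ u x‖ₑ) :=
    (mu.mul (measurable_fderiv ℝ u).enorm).const_mul 2
  set F : E2 → ℝ≥0∞ := fun x => ‖u x‖ₑ ^ 2 with hF
  set D : E2 → ℝ≥0∞ := fun x => 2 * (‖u x‖ₑ * ‖fderiv ℝ u x‖ₑ) with hD
  have mFp : Measurable fun z => F (phi z) := mF.comp phi_mp.measurable
  have mDp : Measurable fun z => D (phi z) := mD.comp phi_mp.measurable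
  have IF : ∫⁻ z, F (phi z) < ⊤ := by rwa [phi_mp.lintegral_comp mF]
  have ne : ∀ i, ‖e2 i‖ ≤ 1 := by intro i; simp [e2]
  have A1 : ∀ᵐ t : ℝ, ∫⁻ s : ℝ, F (phi (s, t)) < ⊤ := by
    rw [Measure.volume_eq_prod, lintegral_prod_symm _ mFp.aemeasurable] at IF
    exact ae_lt_top mFp.lintegral_prod_left' IF.ne
  have A2 : ∀ᵐ s : ℝ, ∫⁻ t : ℝ, F (phi (s, t)) < ⊤ := by
    rw [Measure.volume_eq_prod, lintegral_prod _ mFp.aemeasurable] at IF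
    exact ae_lt_top mFp.lintegral_prod_right' IF.ne
  have B1 : ∀ᵐ t : ℝ, ∀ s : ℝ, F (phi (s, t)) ≤ ∫⁻ s : ℝ, D (phi (s, t)) := by
    filter_upwards [A1] with t ht s
    simp only [phi_eq] at ht ⊢
    exact line_u u hu _ _ (ne 0) ht s
  have B2 : ∀ᵐ s : ℝ, ∀ t : ℝ, F (phi (s, t)) ≤ ∫⁻ t : ℝ, D (phi (s, t)) := by
    filter_upwards [A2] with s hs t
    simp only [phi_eq'] at hs ⊢
    exact line_u u hu _ _ (ne 1) hs t
  have mF2 : Measurable fun z => F (phi z) ^ 2 := mFp.pow_const 2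
  have e1 : ∫⁻ x, F x ^ 2 = ∫⁻ t : ℝ, ∫⁻ s : ℝ, F (phi (s, t)) ^ 2 := by
    rw [← phi_mp.lintegral_comp (mF.pow_const 2), Measure.volume_eq_prod,
      lintegral_prod_symm _ mF2.aemeasurable]
  have e3 : ∫⁻ x, D x = ∫⁻ t : ℝ, ∫⁻ s : ℝ, D (phi (s, t)) := by
    rw [← phi_mp.lintegral_comp mD, Measure.volume_eq_prod,
      lintegral_prod_symm _ mDp.aemeasurable]
  have e4 : ∫⁻ x, D x = ∫⁻ s : ℝ, ∫⁻ t : ℝ, D (phi (s, t)) := by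
    rw [← phi_mp.lintegral_comp mD, Measure.volume_eq_prod,
      lintegral_prod _ mDp.aemeasurable]
  change ∫⁻ x, F x ^ 2 ≤ (∫⁻ x, D x) ^ 2
  rw [e1]
  calc ∫⁻ t : ℝ, ∫⁻ s : ℝ, F (phi (s, t)) ^ 2
      ≤ ∫⁻ t : ℝ, ∫⁻ s : ℝ, (∫⁻ s : ℝ, D (phi (s, t))) * ∫⁻ t : ℝ, D (phi (s, t)) := by
        refine lintegral_mono_ae ?_
        filter_upwards [B1] with t ht
        refine lintegral_mono_ae ?_
        filter_upwards [B2] with s hs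
        rw [pow_two]
        exact mul_le_mul' (ht s) (hs t)
    _ = ∫⁻ t : ℝ, (∫⁻ s : ℝ, D (phi (s, t))) * ∫⁻ x, D x := by
        refine lintegral_congr fun t => ?_
        rw [lintegral_const_mul _ mDp.lintegral_prod_right', ← e4]
    _ = (∫⁻ x, D x) ^ 2 := by
        rw [lintegral_mul_const _ mDp.lintegral_prod_left', ← e3, pow_two]

lemma gn2 (u : E2 → ℂ) (hu : Differentiable ℝ u) (hfin : ∫⁻ x, ‖u x‖ₑ ^ 2 < ⊤) :
    (∫⁻ x, (‖u x‖ₑ ^ 2) ^ (2 : ℝ)) ^ (1 / 2 : ℝ)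
      ≤ 2 * ((∫⁻ x, ‖u x‖ₑ ^ 2) + ∫⁻ x, ‖fderiv ℝ u x‖ₑ ^ 2) := by
  have mu : Measurable fun x => ‖u x‖ₑ := hu.continuous.measurable.enorm
  have md : Measurable fun x => ‖fderiv ℝ u x‖ₑ := (measurable_fderiv ℝ u).enorm
  have H := gn u hu hfin
  simp only [ENNReal.rpow_ofNat]
  have C : ∫⁻ x, 2 * (‖u x‖ₑ * ‖fderiv ℝ u x‖ₑ) ≤
      2 * ((∫⁻ x, ‖u x‖ₑ ^ 2) + ∫⁻ x, ‖fderiv ℝ u x‖ₑ ^ 2) := by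
    have ms : Measurable fun x => ‖u x‖ₑ ^ 2 + ‖fderiv ℝ u x‖ₑ ^ 2 :=
      (mu.pow_const 2).add (md.pow_const 2)
    rw [← lintegral_add_left (mu.pow_const 2), ← lintegral_const_mul _ ms]
    refine lintegral_mono fun x => ?_
    dsimp only
    gcongr
    rcases le_total ‖u x‖ₑ ‖fderiv ℝ u x‖ₑ with h | h
    · refine le_add_left ?_
      rw [pow_two]; gcongr
    · refine le_add_right ?_
      rw [pow_two]; gcongr
  refine (ENNReal.rpow_le_rpow (H.trans (pow_le_pow_left' C 2)) (by norm_num)).trans (le_of_eq ?_)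
  rw [← ENNReal.rpow_ofNat, ← ENNReal.rpow_mul]
  norm_num

lemma H1_sq (u : E2 → ℂ) :
    H1 u ^ 2 = (∫⁻ x, ‖u x‖ₑ ^ 2) + ∫⁻ x, ‖fderiv ℝ u x‖ₑ ^ 2 := by
  have e : ∀ {G : Type} [NormedAddCommGroup G] (f : E2 → G),
      eLpNorm f 2 volume ^ 2 = ∫⁻ x, ‖f x‖ₑ ^ 2 := by
    intro G _ f
    rw [eLpNorm_eq_lintegral_rpow_enorm_toReal (by norm_num) (by norm_num),
      ← ENNReal.rpow_ofNat, ← ENNReal.rpow_mul]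
    simp
  rw [H1, e, e, ← ENNReal.rpow_ofNat, ← ENNReal.rpow_mul]
  norm_num

/-- Lemma 2.1, eq. (2.2), case `s = 0`: for `2 < p < ∞` there is `C_p > 0` such that
`‖K_R ∗ |u|²‖_p ≤ C_p ‖u‖_{H¹}²` for all `R ≥ 0` and all `u ∈ H¹(ℝ², ℂ)`. -/
theorem statement0 (p : ℝ) (hp : 2 < p) :
    ∃ C : ℝ, 0 < C ∧
      ∀ R : ℝ, 0 ≤ R → ∀ u : E2 → ℂ, Differentiable ℝ u → H1 u < ⊤ →
        eLpNorm (convKs R fun y => ‖u y‖ ^ 2) (ENNReal.ofReal p) volume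
          ≤ ENNReal.ofReal C * H1 u ^ 2 := by
  have hp0 : 0 < p := by linarith
  set s : ℝ := 2 * p / (p + 2) with hs
  have hs0 : 0 < s := by positivity
  have hs2 : s < 2 := by rw [hs, div_lt_iff₀ (by linarith)]; linarith
  set S : ℝ≥0∞ := (∫⁻ x, kn x ^ s) ^ (1 / s) with hS
  set T : ℝ≥0∞ := (∫⁻ x, kf x ^ p) ^ (1 / p) with hT
  have hSf : S ≠ ⊤ := ENNReal.rpow_ne_top_of_nonneg (by positivity) (kn_fin s hs0 hs2).ne
  have hTf : T ≠ ⊤ := ENNReal.rpow_ne_top_of_nonneg (by positivity) (kf_fin p hp).ne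
  refine ⟨2 * S.toReal + T.toReal + 1, by positivity, ?_⟩
  intro R _ u hu hH
  have hC : 2 * S + T ≤ ENNReal.ofReal (2 * S.toReal + T.toReal + 1) := by
    rw [ENNReal.ofReal_add (by positivity) (by norm_num),
      ENNReal.ofReal_add (by positivity) (by positivity), ENNReal.ofReal_mul (by norm_num),
      ENNReal.ofReal_toReal hSf, ENNReal.ofReal_toReal hTf]
    simp
  have hHs := H1_sq u
  have hfin : ∫⁻ x, ‖u x‖ₑ ^ 2 < ⊤ := by
    refine lt_of_le_of_lt (b := H1 u ^ 2) ?_ (ENNReal.pow_lt_top hH)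
    rw [hHs]; exact le_self_add
  set ρ : E2 → ℝ≥0∞ := fun x => ‖u x‖ₑ ^ 2 with hρ
  have mρ : Measurable ρ := hu.continuous.measurable.enorm.pow_const 2
  have conv_meas : ∀ k : E2 → ℝ≥0∞, Measurable k →
      Measurable fun x => ∫⁻ y, ρ y * k (x - y) := by
    intro k hk
    refine Measurable.lintegral_prod_right (f := fun x y => ρ y * k (x - y)) ?_
    exact (mρ.comp measurable_snd).mul (hk.comp (measurable_fst.sub measurable_snd))
  have pt : ∀ x, ‖convKs R (fun y => ‖u y‖ ^ 2) x‖ₑ ≤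
      (∫⁻ y, ρ y * kn (x - y)) + ∫⁻ y, ρ y * kf (x - y) := by
    intro x
    have m1 : Measurable fun y => ρ y * kn (x - y) :=
      mρ.mul (kn_meas.comp (measurable_const.sub measurable_id))
    rw [← lintegral_add_left m1]
    refine (enorm_integral_le_lintegral_enorm _).trans (lintegral_mono fun y => ?_)
    rw [enorm_smul, enorm_pow, enorm_norm, ← mul_add]
    exact mul_le_mul' le_rfl (K_le R (x - y))
  have Y1 := young_aux kn ρ kn_meas mρ p s 2 hs0 (by norm_num) (by
    rw [hs, div_le_iff₀ (by linarith)]; nlinarith) hp.le (by rw [hs]; field_simp; ring)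
  have Y2 := young_aux kf ρ kf_meas mρ p p 1 hp0 (by norm_num) le_rfl (by linarith) (by ring)
  have G := gn2 u hu hfin
  rw [← hHs] at G
  have Y2' : (∫⁻ x, ρ x ^ (1 : ℝ)) ^ (1 / 1 : ℝ) ≤ H1 u ^ 2 := by
    rw [hHs]; simp [hρ]
  rw [eLpNorm_eq_lintegral_rpow_enorm_toReal (by simpa using hp0) ENNReal.ofReal_ne_top,
    ENNReal.toReal_ofReal hp0.le]
  calc _ ≤ (∫⁻ x, ((fun x => ∫⁻ y, ρ y * kn (x - y)) + fun x => ∫⁻ y, ρ y * kf (x - y)) x ^ p)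
        ^ (1 / p) := by
        refine ENNReal.rpow_le_rpow (lintegral_mono fun x => ?_) (by positivity)
        exact ENNReal.rpow_le_rpow (pt x) hp0.le
    _ ≤ _ := ENNReal.lintegral_Lp_add_le (conv_meas kn kn_meas).aemeasurable
        (conv_meas kf kf_meas).aemeasurable (by linarith)
    _ ≤ S * (2 * H1 u ^ 2) + T * H1 u ^ 2 :=
        add_le_add (Y1.trans (mul_le_mul' le_rfl G)) (Y2.trans (mul_le_mul' le_rfl Y2'))
    _ = (2 * S + T) * H1 u ^ 2 := by ring
    _ ≤ _ := mul_le_mul' hC le_rfl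
end
end

section
/- There exists a constant C > 0 such that for every R with 0 < R < e^{-1}, setting p := 2 + 1/|log R| (where |log R| = −log R > 1), one has ‖K_R‖_p ≤ C √(|log R|). -/
noncomputable section
open MeasureTheory ENNReal
open scoped RealInnerProductSpace

lemma norm_perp4 (x : E2) : ‖perp x‖ = ‖x‖ := by
  simp [perp, EuclideanSpace.norm_eq, Fin.sum_univ_two, add_comm]

lemma norm_K_le4 {R : ℝ} (hR : 0 < R) (x : E2) : ‖K R x‖ ≤ (max R ‖x‖)⁻¹ := by
  have hm : 0 < max R ‖x‖ := lt_max_of_lt_left hR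
  rw [K, norm_smul, norm_perp4, norm_inv, norm_pow, Real.norm_of_nonneg hm.le]
  calc ((max R ‖x‖) ^ 2)⁻¹ * ‖x‖ ≤ ((max R ‖x‖) ^ 2)⁻¹ * max R ‖x‖ := by
        gcongr; exact le_max_right _ _
    _ = _ := by field_simp

lemma radial4 {R : ℝ} (hR : 0 < R) {p : ℝ} (hp : 2 < p) :
    IntegrableOn (fun y : ℝ => y ^ (2 - 1) • (max R y) ^ (-p)) (Set.Ioi 0) ∧
    ∫ y in Set.Ioi (0:ℝ), y ^ (2 - 1) • (max R y) ^ (-p) ≤ R ^ (2 - p) * (1 + 1 / (p - 2)) := by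
  have h1 : IntegrableOn (fun y : ℝ => y ^ (2 - 1) • (max R y) ^ (-p)) (Set.Ioc 0 R) := by
    apply Continuous.integrableOn_Ioc
    have hc : Continuous fun y : ℝ => (max R y) ^ (-p) := by
      apply Continuous.rpow_const (by fun_prop)
      intro x; left; exact (lt_max_of_lt_left hR).ne'
    fun_prop
  have e2 : Set.EqOn (fun y : ℝ => y ^ (1 - p)) (fun y : ℝ => y ^ (2 - 1) • (max R y) ^ (-p))
      (Set.Ioi R) := by
    intro y hy
    have hy' : R < y := hy
    simp only [max_eq_right hy'.le, smul_eq_mul]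
    rw [sub_eq_add_neg, Real.rpow_add (hR.trans hy')]
    simp
  have h2' := integrableOn_Ioi_rpow_of_lt (a := 1 - p) (by linarith) hR
  have h2 := h2'.congr_fun e2 measurableSet_Ioi
  have hu : Set.Ioc 0 R ∪ Set.Ioi R = Set.Ioi (0:ℝ) := Set.Ioc_union_Ioi_eq_Ioi hR.le
  have hd : Disjoint (Set.Ioc 0 R) (Set.Ioi R) := Set.Ioc_disjoint_Ioi le_rfl
  refine ⟨hu ▸ h1.union h2, ?_⟩
  rw [← hu, setIntegral_union hd measurableSet_Ioi h1 h2,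
    ← setIntegral_congr_fun measurableSet_Ioi e2, integral_Ioi_rpow_of_lt (by linarith) hR]
  have b1 : ∫ y in Set.Ioc 0 R, y ^ (2 - 1) • (max R y) ^ (-p) ≤
      ∫ y in Set.Ioc 0 R, R * R ^ (-p) := by
    apply setIntegral_mono_on h1 (integrableOn_const (by simp)) measurableSet_Ioc
    intro y hy
    simp only [max_eq_left hy.2, smul_eq_mul]
    have := hy.2
    simp only [Nat.add_one_sub_one, pow_one]
    gcongr
  have b2 : ∫ y in Set.Ioc 0 R, R * R ^ (-p) = R ^ (2 - p) := by
    rw [setIntegral_const]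
    simp only [Real.volume_real_Ioc_of_le hR.le, smul_eq_mul]
    rw [sub_eq_add_neg 2 p, Real.rpow_add hR, Real.rpow_two]
    ring
  have b3 : -R ^ (1 - p + 1) / (1 - p + 1) = R ^ (2 - p) * (1 / (p - 2)) := by
    have : 1 - p + 1 = 2 - p := by ring
    rw [this]
    have h : p - 2 ≠ 0 := by linarith
    have h' : 2 - p ≠ 0 := by linarith
    field_simp
    ring
  rw [b3, mul_add, mul_one]
  linarith

/-- Corollary 2.4: there is `C > 0` such that for all `0 < R < e⁻¹`, with
`p = 2 + 1/|log R|` one has `‖K_R‖_p ≤ C √|log R|`. -/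
theorem statement4 :
    ∃ C : ℝ, 0 < C ∧ ∀ R : ℝ, 0 < R → R < Real.exp (-1) →
      eLpNorm (K R) (ENNReal.ofReal (2 + 1 / (-Real.log R))) volume
        ≤ ENNReal.ofReal (C * Real.sqrt (-Real.log R)) := by
  set V : ℝ := (volume : Measure E2).real (Metric.ball 0 1) with hV
  have hV0 : 0 ≤ V := measureReal_nonneg
  set A : ℝ := 4 * V * Real.exp 1 + 1 with hA
  have hA1 : 1 ≤ A := by have := mul_nonneg hV0 (Real.exp_pos 1).le; linarith
  refine ⟨Real.sqrt A, by positivity, ?_⟩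
  intro R hR hR1
  set L : ℝ := -Real.log R with hL
  have hL1 : 1 < L := by
    have := (Real.log_lt_iff_lt_exp hR).2 hR1
    linarith
  have hL0 : 0 < L := by linarith
  set p : ℝ := 2 + 1 / L with hp
  have hp2 : 2 < p := by have : 0 < 1 / L := by positivity
                         linarith
  obtain ⟨i1, i2⟩ := radial4 hR hp2
  have hRp : R ^ (2 - p) = Real.exp 1 := by
    rw [Real.rpow_def_of_pos hR]
    congr 1
    have : Real.log R = -L := by rw [hL]; ring
    rw [this, hp]; field_simp; ring
  have hpL : 1 / (p - 2) = L := by rw [hp]; simp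
  have hdim : Module.finrank ℝ E2 = 2 := by simp
  have hint : Integrable (fun x : E2 => (max R ‖x‖) ^ (-p)) volume := by
    rw [integrable_fun_norm_addHaar volume (f := fun r => (max R r) ^ (-p)), hdim]
    exact i1
  have hbound : ∫ x : E2, (max R ‖x‖) ^ (-p) ≤ A * L := by
    rw [integral_fun_norm_addHaar volume (fun r => (max R r) ^ (-p)), hdim]
    rw [hRp, hpL] at i2
    rw [nsmul_eq_mul, smul_eq_mul, ← hV]
    calc ((2:ℕ):ℝ) * (V * ∫ y in Set.Ioi (0:ℝ), y ^ (2 - 1) • (max R y) ^ (-p))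
        ≤ 2 * (V * (Real.exp 1 * (1 + L))) := by push_cast; gcongr
      _ ≤ 2 * (V * (Real.exp 1 * (L + L))) := by gcongr
      _ ≤ A * L := by rw [hA]; nlinarith
  have hAL : 1 ≤ A * L := by nlinarith
  have hp0 : 0 < p := by linarith
  rw [eLpNorm_eq_lintegral_rpow_enorm_toReal (by simpa using hp0) ENNReal.ofReal_ne_top,
    ENNReal.toReal_ofReal hp0.le]
  have hl : ∫⁻ x : E2, ‖K R x‖ₑ ^ p ≤ ENNReal.ofReal (A * L) := by
    calc ∫⁻ x : E2, ‖K R x‖ₑ ^ p ≤ ∫⁻ x : E2, ENNReal.ofReal ((max R ‖x‖) ^ (-p)) := by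
          apply lintegral_mono
          intro x
          have hm : 0 < max R ‖x‖ := lt_max_of_lt_left hR
          simp only
          rw [← ofReal_norm, ENNReal.ofReal_rpow_of_nonneg (norm_nonneg _) hp0.le]
          apply ENNReal.ofReal_le_ofReal
          rw [Real.rpow_neg hm.le, ← Real.inv_rpow hm.le]
          exact Real.rpow_le_rpow (norm_nonneg _) (norm_K_le4 hR x) hp0.le
      _ = ENNReal.ofReal (∫ x : E2, (max R ‖x‖) ^ (-p)) := by
          rw [ofReal_integral_eq_lintegral_ofReal hint]
          exact Filter.Eventually.of_forall fun x => by
            have hm : 0 < max R ‖x‖ := lt_max_of_lt_left hR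
            positivity
      _ ≤ _ := ENNReal.ofReal_le_ofReal hbound
  calc (∫⁻ x : E2, ‖K R x‖ₑ ^ p) ^ (1 / p) ≤ (ENNReal.ofReal (A * L)) ^ (1 / p) := by
        gcongr
    _ ≤ ENNReal.ofReal (Real.sqrt A * Real.sqrt L) := by
        rw [ENNReal.ofReal_rpow_of_nonneg (by linarith) (by positivity)]
        apply ENNReal.ofReal_le_ofReal
        rw [← Real.sqrt_mul (by linarith), Real.sqrt_eq_rpow]
        apply Real.rpow_le_rpow_of_exponent_le hAL
        apply one_div_le_one_div_of_le <;> linarith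
end
end

section
/- There exists a constant C > 0 such that for every R with 0 < R < e^{-1} and every smooth compactly supported f : ℝ² × ℝ² → ℂ, the quantity Q(f) := 4 ∬_{ℝ²×ℝ²} |K_R(x − y) · ∇_x f(x,y)|² dx dy satisfies both Q(f) ≤ C |log R|² ∬ |f(x,y) − Δ_x f(x,y)|² dx dy and Q(f) ≤ C |log R|² ∬ ( ‖∇_x f(x,y)‖² + ‖∇_y ∇_x f(x,y)‖² ) dx dy, where ∇_x, Δ_x act in the first ℝ²-variable, ∇_y in the second, and ‖∇_y∇_x f‖ is the Hilbert–Schmidt norm of the mixed second derivative. (Q(f) is the quadratic form of the square of the mixed two-body operator −i∇_x·∇^⊥w_R(x−y) + ∇^⊥w_R(x−y)·(−i∇_x), since ∇_x · K_R(x−y) = 0.) -/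
noncomputable section
open MeasureTheory ENNReal
open scoped RealInnerProductSpace

/-- Laplacian in the first `ℝ²`-variable of `f : ℝ² × ℝ² → ℂ`. -/
def lapx (f : E2 × E2 → ℂ) (z : E2 × E2) : ℂ :=
  ∑ j : Fin 2, fderiv ℝ (fun x => fderiv ℝ (fun x' => f (x', z.2)) x (e2 j)) z.1 (e2 j)

/-- Directional derivative on the product space. -/
def DD (v : E2 × E2) (u : E2 × E2 → ℂ) (z : E2 × E2) : ℂ := fderiv ℝ u z v

/-- Smooth with compact support. -/
def Good (u : E2 × E2 → ℂ) : Prop := ContDiff ℝ (⊤ : ℕ∞) u ∧ HasCompactSupport u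

lemma Good.DD {u : E2 × E2 → ℂ} (h : Good u) (v : E2 × E2) : Good (DD v u) := by
  constructor
  · exact (h.1.fderiv_right (m := (⊤ : ℕ∞)) (by norm_cast)).clm_apply contDiff_const
  · exact h.2.fderiv_apply (𝕜 := ℝ) v

lemma Good.continuous {u : E2 × E2 → ℂ} (h : Good u) : Continuous u := h.1.continuous

lemma Good.differentiable {u : E2 × E2 → ℂ} (h : Good u) : Differentiable ℝ u :=
  h.1.differentiable (by norm_num)

lemma DD_comm {u : E2 × E2 → ℂ} (h : Good u) (v w : E2 × E2) :
    DD v (DD w u) = DD w (DD v u) := by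
  funext z
  have hs : IsSymmSndFDerivAt ℝ u z :=
    (h.1.contDiffAt (x := z)).isSymmSndFDerivAt (by simp only [minSmoothness_of_isRCLikeNormedField]; exact WithTop.coe_le_coe.2 (le_top : (2 : ℕ∞) ≤ ⊤))
  have hd : DifferentiableAt ℝ (fderiv ℝ u) z :=
    ((h.1.fderiv_right (m := (⊤ : ℕ∞)) (by norm_cast)).differentiable (by norm_num)) z
  have key : ∀ a b : E2 × E2, DD a (DD b u) z = fderiv ℝ (fderiv ℝ u) z a b := by
    intro a b
    unfold DD
    rw [fderiv_clm_apply hd (differentiableAt_const b)]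
    simp
  rw [key, key]
  exact hs.eq v w

lemma integrable_inner_good {a b : E2 × E2 → ℂ} (ha : Good a) (hb : Continuous b) :
    Integrable (fun z => ⟪a z, b z⟫) := by
  apply Continuous.integrable_of_hasCompactSupport
  · exact ha.continuous.inner hb
  · refine ha.2.mono ?_
    intro z hz
    simp only [Function.mem_support] at hz ⊢
    intro h0
    exact hz (by simp [h0])

lemma integrable_sq_good {a : E2 × E2 → ℂ} (ha : Good a) :
    Integrable (fun z => ‖a z‖ ^ 2) := by
  simpa [real_inner_self_eq_norm_sq] using integrable_inner_good ha ha.continuous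

instance volHaar : (volume : Measure (E2 × E2)).IsAddHaarMeasure :=
  inferInstanceAs ((volume : Measure E2).prod (volume : Measure E2)).IsAddHaarMeasure

lemma ibp {a b : E2 × E2 → ℂ} (ha : Good a) (hb : Good b) (v : E2 × E2) :
    ∫ z, ⟪a z, DD v b z⟫ = - ∫ z, ⟪DD v a z, b z⟫ := by
  refine integral_bilinear_fderiv_right_eq_neg_left_of_integrable (B := (innerSL ℝ : ℂ →L[ℝ] ℂ →L[ℝ] ℝ)) ?_ ?_ ?_ ?_ ?_
  · exact integrable_inner_good (ha.DD v) hb.continuous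
  · exact integrable_inner_good ha (hb.DD v).continuous
  · exact integrable_inner_good ha hb.continuous
  · intro x _; exact ha.differentiable x
  · intro x _; exact hb.differentiable x

/-- The elliptic identity, as an inequality. -/
lemma elliptic {f : E2 × E2 → ℂ} (hf : Good f) (v w : E2 × E2) :
    (∫ z, ‖DD v f z‖ ^ 2) + (∫ z, ‖DD w f z‖ ^ 2) + (∫ z, ‖DD v (DD v f) z‖ ^ 2)
      + (∫ z, ‖DD w (DD w f) z‖ ^ 2) + 2 * (∫ z, ‖DD v (DD w f) z‖ ^ 2)
      ≤ ∫ z, ‖f z - (DD v (DD v f) z + DD w (DD w f) z)‖ ^ 2 := by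
  have hv := hf.DD v
  have hw := hf.DD w
  have hvv := hv.DD v
  have hww := hw.DD w
  have hvw := hw.DD v
  have e1 : ∀ z, ‖f z - (DD v (DD v f) z + DD w (DD w f) z)‖ ^ 2 =
      ‖f z‖ ^ 2 + ‖DD v (DD v f) z‖ ^ 2 + ‖DD w (DD w f) z‖ ^ 2
        - 2 * ⟪f z, DD v (DD v f) z⟫ - 2 * ⟪f z, DD w (DD w f) z⟫
        + 2 * ⟪DD v (DD v f) z, DD w (DD w f) z⟫ := by
    intro z
    rw [norm_sub_sq_real, norm_add_sq_real, inner_add_right]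
    ring
  have i1 : ∫ z, ⟪f z, DD v (DD v f) z⟫ = - ∫ z, ‖DD v f z‖ ^ 2 := by
    rw [ibp hf hv v]; simp [real_inner_self_eq_norm_sq]
  have i2 : ∫ z, ⟪f z, DD w (DD w f) z⟫ = - ∫ z, ‖DD w f z‖ ^ 2 := by
    rw [ibp hf hw w]; simp [real_inner_self_eq_norm_sq]
  have i3 : ∫ z, ⟪DD v (DD v f) z, DD w (DD w f) z⟫ = ∫ z, ‖DD v (DD w f) z‖ ^ 2 := by
    rw [ibp hvv hw w]
    have : DD w (DD v (DD v f)) = DD v (DD v (DD w f)) := by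
      rw [DD_comm hv w v, DD_comm hf w v]
    rw [this]
    have h2 := ibp hvw hw v
    simp only [real_inner_self_eq_norm_sq] at h2
    rw [h2]
  have n0 : 0 ≤ ∫ z, ‖f z‖ ^ 2 := integral_nonneg fun z => by positivity
  have n1 : 0 ≤ ∫ z, ‖DD v f z‖ ^ 2 := integral_nonneg fun z => by positivity
  have n2 : 0 ≤ ∫ z, ‖DD w f z‖ ^ 2 := integral_nonneg fun z => by positivity
  have If := integrable_sq_good hf
  have Ivv := integrable_sq_good hvv
  have Iww := integrable_sq_good hww
  have J1 := (integrable_inner_good hf hvv.continuous).const_mul 2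
  have J2 := (integrable_inner_good hf hww.continuous).const_mul 2
  have J3 := (integrable_inner_good hvv hww.continuous).const_mul 2
  simp_rw [e1]
  rw [integral_add, integral_sub, integral_sub, integral_add, integral_add,
    integral_const_mul, integral_const_mul, integral_const_mul, i1, i2, i3]
  · linarith
  all_goals first | exact If | exact Ivv | exact Iww | exact J1 | exact J2 | exact J3 |
    exact If.add Ivv | exact (If.add Ivv).add Iww | exact ((If.add Ivv).add Iww).sub J1 |
    exact (((If.add Ivv).add Iww).sub J1).sub J2

/-- The profile. -/
def mm (R t : ℝ) : ℝ :=
  (1 / (8 * (-Real.log R))) * (2 + Real.log (R ^ 2 + t) / (2 * (-Real.log R)))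

/-- The pointwise scalar inequality. -/
lemma scalar_ineq {R t : ℝ} (hR : 0 < R) (hR1 : R < Real.exp (-1)) (ht : 0 ≤ t) :
    1 / (R ^ 2 + t) ≤ 16 * (-Real.log R) ^ 2 *
      ((2 * R ^ 2 * mm R t + t * (1 / (8 * (-Real.log R) ^ 2))) / (R ^ 2 + t) ^ 2
        - t * mm R t ^ 2 / (R ^ 2 + t) ^ 2 + 1) := by
  have hL : 1 < -Real.log R := by
    have := Real.log_lt_log hR hR1
    rw [Real.log_exp] at this; linarith
  have hq0 : 0 < R ^ 2 + t := by positivity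
  have hlq : 2 * Real.log R ≤ Real.log (R ^ 2 + t) := by
    have := Real.log_le_log (by positivity : 0 < R ^ 2) (by linarith : R ^ 2 ≤ R ^ 2 + t)
    rwa [Real.log_pow] at this
  unfold mm
  set L := -Real.log R with hLd
  set q := R ^ 2 + t with hq
  have hlq' : -(2 * L) ≤ Real.log q := by linarith
  set ℓ := Real.log q with hl
  have hL0 : 0 < L := by linarith
  set m := (1 / (8 * L)) * (2 + ℓ / (2 * L)) with hm
  have hmL : m * (8 * L) = 2 + ℓ / (2 * L) := by rw [hm]; field_simp
  have hlow : 1 ≤ m * (8 * L) := by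
    rw [hmL]
    have : -1 ≤ ℓ / (2 * L) := by rw [le_div_iff₀ (by positivity)]; linarith
    linarith
  have hm0 : 0 < m := by
    by_contra h
    push Not at h
    nlinarith
  have hR2 : R ^ 2 = q - t := by rw [hq]; ring
  have htq : t ≤ q := by rw [hq]; nlinarith [sq_nonneg R]
  have hmain : q ≤ 16 * L ^ 2 * (2 * R ^ 2 * m + t * (1 / (8 * L ^ 2)) - t * m ^ 2 + q ^ 2) := by
    have hx : 16 * L ^ 2 * (2 * R ^ 2 * m + t * (1 / (8 * L ^ 2)) - t * m ^ 2 + q ^ 2)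
      = R ^ 2 * (32 * L ^ 2 * m) + 2 * t - t * (16 * L ^ 2 * m ^ 2) + 16 * L ^ 2 * q ^ 2 := by
      field_simp
      ring
    rw [hx]
    rcases le_total q 1 with h1 | h1
    · have hl0 : ℓ ≤ 0 := Real.log_nonpos hq0.le h1
      have hup : m * (8 * L) ≤ 2 := by
        rw [hmL]
        have : ℓ / (2 * L) ≤ 0 := div_nonpos_of_nonpos_of_nonneg hl0 (by positivity)
        linarith
      have a1 : 16 * L ^ 2 * m ^ 2 ≤ 1 := by nlinarith [mul_pos hm0 hL0]
      have a2 : 1 ≤ 32 * L ^ 2 * m := by nlinarith [mul_pos hm0 hL0]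
      have a3 : R ^ 2 * 1 ≤ R ^ 2 * (32 * L ^ 2 * m) := by gcongr
      have a4 : t * (16 * L ^ 2 * m ^ 2) ≤ t * 1 := by gcongr
      have : 0 ≤ 16 * L ^ 2 * q ^ 2 := by positivity
      linarith
    · have hs : ℓ ≤ 2 * (Real.sqrt q - 1) := by
        have h3 := Real.log_le_sub_one_of_pos (Real.sqrt_pos.mpr hq0)
        rw [Real.log_sqrt hq0.le] at h3
        linarith
      have hsq : Real.sqrt q ^ 2 = q := Real.sq_sqrt hq0.le
      have hs1 : 1 ≤ Real.sqrt q := by rw [Real.one_le_sqrt]; exact h1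
      have hl0 : 0 ≤ ℓ := Real.log_nonneg h1
      have hup : m * (8 * L) ≤ 2 * Real.sqrt q := by
        rw [hmL]
        have : ℓ / (2 * L) ≤ ℓ / 2 := by
          apply div_le_div_of_nonneg_left hl0 (by norm_num) (by linarith)
        linarith
      have a1 : 16 * L ^ 2 * m ^ 2 ≤ q := by
        have : (m * (8 * L)) ^ 2 ≤ (2 * Real.sqrt q) ^ 2 := by gcongr
        nlinarith
      have a4 : t * (16 * L ^ 2 * m ^ 2) ≤ q * q := by gcongr
      have a5 : 0 ≤ R ^ 2 * (32 * L ^ 2 * m) := by positivity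
      have hL2 : 1 ≤ L ^ 2 := by nlinarith
      have a6 : 1 * q ^ 2 ≤ L ^ 2 * q ^ 2 := by gcongr
      nlinarith
  have heq : (2 * R ^ 2 * m + t * (1 / (8 * L ^ 2))) / q ^ 2 - t * m ^ 2 / q ^ 2 + 1
      = (2 * R ^ 2 * m + t * (1 / (8 * L ^ 2)) - t * m ^ 2 + q ^ 2) / q ^ 2 := by
    field_simp
  rw [heq, ← mul_div_assoc, div_le_div_iff₀ hq0 (by positivity)]
  nlinarith

/-- The radial factor `p(t)`. -/
def pp (R t : ℝ) : ℝ := mm R t / (R ^ 2 + t)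

lemma pp_hasDerivAt {R t : ℝ} (hR : 0 < R) (hL : 1 < -Real.log R) (ht : 0 ≤ t) :
    HasDerivAt (pp R) (1 / (16 * (-Real.log R) ^ 2) / (R ^ 2 + t) ^ 2
      - mm R t / (R ^ 2 + t) ^ 2) t := by
  have hq0 : 0 < R ^ 2 + t := by positivity
  have h1 : HasDerivAt (fun t : ℝ => R ^ 2 + t) 1 t := (hasDerivAt_id t).const_add _
  have h2 := h1.log hq0.ne'
  have h3 : HasDerivAt (mm R) _ t :=
    ((h2.div_const (2 * (-Real.log R))).const_add 2).const_mul (1 / (8 * (-Real.log R)))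
  have h4 := h3.div h1 hq0.ne'
  refine h4.congr_deriv ?_
  have : -Real.log R ≠ 0 := by linarith
  generalize -Real.log R = L at *
  field_simp
  ring

lemma pp_contDiff {R : ℝ} (hR : 0 < R) {E : Type*} [NormedAddCommGroup E] [NormedSpace ℝ E]
    {n : E → ℝ} (hn : ContDiff ℝ (⊤ : ℕ∞) n) (hn0 : ∀ z, 0 ≤ n z) :
    ContDiff ℝ (⊤ : ℕ∞) (fun z => pp R (n z)) := by
  have hq : ∀ z, R ^ 2 + n z ≠ 0 := fun z => by have := hn0 z; positivity
  unfold pp mm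
  refine ContDiff.div ?_ (contDiff_const.add hn) hq
  exact contDiff_const.mul (contDiff_const.add (((contDiff_const.add hn).log hq).div_const _))

/-- Hardy inequality with logarithmic weight. -/
lemma hardy {R : ℝ} (hR : 0 < R) (hR1 : R < Real.exp (-1)) {u : E2 × E2 → ℂ} (hu : Good u)
    (a : Fin 2 → (E2 × E2 →L[ℝ] ℝ)) (v : Fin 2 → E2 × E2)
    (hav : ∀ i k, a i (v k) = if i = k then 1 else 0) :
    ∫ z, 1 / (R ^ 2 + (a 0 z ^ 2 + a 1 z ^ 2)) * ‖u z‖ ^ 2 ≤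
      16 * (-Real.log R) ^ 2 *
        ∫ z, (‖u z‖ ^ 2 + ‖DD (v 0) u z‖ ^ 2 + ‖DD (v 1) u z‖ ^ 2) := by
  have hL : 1 < -Real.log R := by
    have := Real.log_lt_log hR hR1
    rw [Real.log_exp] at this; linarith
  set n : E2 × E2 → ℝ := fun z => a 0 z ^ 2 + a 1 z ^ 2 with hn
  have hn0 : ∀ z, 0 ≤ n z := fun z => by simp only [hn]; positivity
  have hnC : ContDiff ℝ (⊤ : ℕ∞) n := by simp only [hn]; fun_prop
  have hpC := pp_contDiff hR hnC hn0
  set φ : Fin 2 → E2 × E2 → ℝ := fun k z => a k z * pp R (n z) with hφ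
  have hφC : ∀ k, ContDiff ℝ (⊤ : ℕ∞) (φ k) := fun k => (a k).contDiff.mul hpC
  set p' : ℝ → ℝ := fun t => 1 / (16 * (-Real.log R) ^ 2) / (R ^ 2 + t) ^ 2
      - mm R t / (R ^ 2 + t) ^ 2 with hp'
  have hdφ : ∀ k z, fderiv ℝ (φ k) z (v k) = pp R (n z) + 2 * (a k z) ^ 2 * p' (n z) := by
    intro k z
    have h1 : ∀ i, HasFDerivAt (fun z => a i z) (a i) z := fun i => (a i).hasFDerivAt
    have h2 := ((h1 0).pow 2).add ((h1 1).pow 2)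
    have h3 := (pp_hasDerivAt hR hL (hn0 z)).comp_hasFDerivAt z h2
    have h4 := (h1 k).mul h3
    have h5 : HasFDerivAt (φ k) _ z := h4
    rw [h5.fderiv]
    fin_cases k <;> simp [hav, hp', n] <;> ring
  set g : E2 × E2 → ℝ := fun z => ‖u z‖ ^ 2 with hg
  have hgC : ContDiff ℝ (⊤ : ℕ∞) g := hu.1.norm_sq ℝ
  have hgS : HasCompactSupport g := by
    refine hu.2.mono ?_
    intro z hz
    simp only [Function.mem_support, hg] at hz ⊢
    intro h0
    exact hz (by simp [h0])
  have hdg : ∀ k z, fderiv ℝ g z (v k) = 2 * ⟪u z, DD (v k) u z⟫ := by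
    intro k z
    have h1 := (hu.differentiable z).hasFDerivAt.norm_sq
    have h2 : HasFDerivAt g _ z := h1
    rw [h2.fderiv]
    simp [DD]
    ring
  have hdgC : ∀ k, Continuous fun z => fderiv ℝ g z (v k) := fun k =>
    (hgC.continuous_fderiv (by norm_num)).clm_apply continuous_const
  have hdφC : ∀ k, Continuous fun z => fderiv ℝ (φ k) z (v k) := fun k =>
    ((hφC k).continuous_fderiv (by norm_num)).clm_apply continuous_const
  have I1 : ∀ k, Integrable (fun z => fderiv ℝ (φ k) z (v k) * g z) := fun k =>
    ((hdφC k).mul hgC.continuous).integrable_of_hasCompactSupport hgS.mul_left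
  have I2 : ∀ k, Integrable (fun z => φ k z * fderiv ℝ g z (v k)) := fun k =>
    ((hφC k).continuous.mul (hdgC k)).integrable_of_hasCompactSupport
      (hgS.fderiv_apply (𝕜 := ℝ) (v k)).mul_left
  have I3 : ∀ k, Integrable (fun z => φ k z * g z) := fun k =>
    ((hφC k).continuous.mul hgC.continuous).integrable_of_hasCompactSupport hgS.mul_left
  have J : ∀ k, ∫ z, φ k z * fderiv ℝ g z (v k) = - ∫ z, fderiv ℝ (φ k) z (v k) * g z :=
    fun k => integral_mul_fderiv_eq_neg_fderiv_mul_of_integrable (I1 k) (I2 k) (I3 k)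
      (fun x _ => (hφC k).differentiable (by norm_num) x)
      (fun x _ => hgC.differentiable (by norm_num) x)
  set S : E2 × E2 → ℝ := fun z => φ 0 z * fderiv ℝ g z (v 0) + fderiv ℝ (φ 0) z (v 0) * g z
    + (φ 1 z * fderiv ℝ g z (v 1) + fderiv ℝ (φ 1) z (v 1) * g z) with hS
  have IS : Integrable S := ((I2 0).add (I1 0)).add ((I2 1).add (I1 1))
  have S0 : ∫ z, S z = 0 := by
    simp only [hS]
    have A0 : Integrable (fun z => φ 0 z * fderiv ℝ g z (v 0) + fderiv ℝ (φ 0) z (v 0) * g z) :=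
      (I2 0).add (I1 0)
    have A1 : Integrable (fun z => φ 1 z * fderiv ℝ g z (v 1) + fderiv ℝ (φ 1) z (v 1) * g z) :=
      (I2 1).add (I1 1)
    rw [integral_add A0 A1, integral_add (I2 0) (I1 0), integral_add (I2 1) (I1 1), J, J]
    ring
  set T : E2 × E2 → ℝ := fun z => ‖u z‖ ^ 2 + ‖DD (v 0) u z‖ ^ 2 + ‖DD (v 1) u z‖ ^ 2 with hT
  have IT : Integrable T := ((integrable_sq_good hu).add (integrable_sq_good (hu.DD (v 0)))).add
    (integrable_sq_good (hu.DD (v 1)))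
  have hfin : ∫ z, 1 / (R ^ 2 + n z) * ‖u z‖ ^ 2 ≤
      ∫ z, 16 * (-Real.log R) ^ 2 * (T z + S z) := by
    apply integral_mono_of_nonneg
    · refine Filter.Eventually.of_forall fun z => ?_
      have := hn0 z
      simp only [Pi.zero_apply]
      positivity
    · exact (IT.add IS).const_mul _
    · refine Filter.Eventually.of_forall fun z => ?_
      simp only
      have hq0 : 0 < R ^ 2 + n z := by have := hn0 z; positivity
      have hsc := scalar_ineq hR hR1 (hn0 z)
      have hdiv : fderiv ℝ (φ 0) z (v 0) + fderiv ℝ (φ 1) z (v 1) =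
          (2 * R ^ 2 * mm R (n z) + n z * (1 / (8 * (-Real.log R) ^ 2))) / (R ^ 2 + n z) ^ 2 := by
        rw [hdφ, hdφ]
        have : 2 * a 0 z ^ 2 * p' (n z) + 2 * a 1 z ^ 2 * p' (n z) = 2 * n z * p' (n z) := by
          simp only [hn]; ring
        have e : pp R (n z) + 2 * a 0 z ^ 2 * p' (n z) + (pp R (n z) + 2 * a 1 z ^ 2 * p' (n z))
          = 2 * pp R (n z) + 2 * n z * p' (n z) := by linarith
        rw [e]
        simp only [hp', pp]
        have hL' : -Real.log R ≠ 0 := by linarith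
        generalize -Real.log R = L at *
        generalize mm R (n z) = m at *
        field_simp
        ring
      have hF : φ 0 z ^ 2 + φ 1 z ^ 2 = n z * mm R (n z) ^ 2 / (R ^ 2 + n z) ^ 2 := by
        simp only [hφ, pp, hn]
        field_simp
      rw [← hdiv, ← hF] at hsc
      have hcs : ∀ k, -(φ k z ^ 2 * ‖u z‖ ^ 2) - ‖DD (v k) u z‖ ^ 2
          ≤ φ k z * fderiv ℝ g z (v k) := by
        intro k
        rw [hdg]
        have h := sq_nonneg ‖φ k z • u z + DD (v k) u z‖
        rw [norm_add_sq_real, norm_smul, real_inner_smul_left, mul_pow, Real.norm_eq_abs,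
          sq_abs] at h
        linarith
      calc 1 / (R ^ 2 + n z) * ‖u z‖ ^ 2 ≤ _ := mul_le_mul_of_nonneg_right hsc (sq_nonneg _)
        _ = 16 * (-Real.log R) ^ 2 * ((fderiv ℝ (φ 0) z (v 0) + fderiv ℝ (φ 1) z (v 1)
            - (φ 0 z ^ 2 + φ 1 z ^ 2) + 1) * ‖u z‖ ^ 2) := by ring
        _ ≤ _ := by
          apply mul_le_mul_of_nonneg_left _ (by positivity)
          simp only [hT, hS, hg]
          have h0 := hcs 0
          have h1 := hcs 1
          simp only [hg] at h0 h1
          linarith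
  rw [integral_const_mul, integral_add IT IS, S0, add_zero] at hfin
  exact hfin

lemma K_sq_le {R : ℝ} (hR : 0 < R) (x : E2) :
    K R x 0 ^ 2 + K R x 1 ^ 2 ≤ 2 * (1 / (R ^ 2 + (x 0 ^ 2 + x 1 ^ 2))) := by
  have hx : ‖x‖ ^ 2 = x 0 ^ 2 + x 1 ^ 2 := by
    rw [EuclideanSpace.norm_sq_eq]; simp
  have e : K R x 0 ^ 2 + K R x 1 ^ 2 = ‖x‖ ^ 2 / (max R ‖x‖ ^ 2) ^ 2 := by
    rw [hx]
    simp [K, perp]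
    field_simp
    ring
  rw [e, ← hx]
  have h1 : R ^ 2 ≤ max R ‖x‖ ^ 2 := by gcongr; exact le_max_left _ _
  have h2 : ‖x‖ ^ 2 ≤ max R ‖x‖ ^ 2 := by gcongr; exact le_max_right _ _
  have h0 : 0 < max R ‖x‖ ^ 2 := pow_pos (lt_max_of_lt_left hR) 2
  have h3 : 0 < R ^ 2 := by positivity
  generalize max R ‖x‖ ^ 2 = M at *
  have h4 := sq_nonneg ‖x‖
  generalize ‖x‖ ^ 2 = N at *
  rw [mul_one_div, div_le_div_iff₀ (by positivity) (by positivity)]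
  nlinarith

lemma vec_decomp (h : E2) : h = h 0 • e2 0 + h 1 • e2 1 := by
  ext i
  fin_cases i <;> simp [e2]

lemma partial_x {f : E2 × E2 → ℂ} (hf : Good f) (z : E2 × E2) :
    fderiv ℝ (fun x => f (x, z.2)) z.1 =
      (fderiv ℝ f z).comp (ContinuousLinearMap.inl ℝ E2 E2) := by
  have h1 : HasFDerivAt f (fderiv ℝ f z) (z.1, z.2) := (hf.differentiable z).hasFDerivAt
  exact (h1.comp z.1 (hasFDerivAt_prodMk_left z.1 z.2)).fderiv

lemma partial_x_apply {f : E2 × E2 → ℂ} (hf : Good f) (z : E2 × E2) (h : E2) :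
    fderiv ℝ (fun x => f (x, z.2)) z.1 h = DD (h, 0) f z := by
  rw [partial_x hf]; simp [DD]

lemma lapx_eq {f : E2 × E2 → ℂ} (hf : Good f) (z : E2 × E2) :
    lapx f z = DD (e2 0, 0) (DD (e2 0, 0) f) z + DD (e2 1, 0) (DD (e2 1, 0) f) z := by
  have key : ∀ j : Fin 2,
      fderiv ℝ (fun x => fderiv ℝ (fun x' => f (x', z.2)) x (e2 j)) z.1 (e2 j)
        = DD (e2 j, 0) (DD (e2 j, 0) f) z := by
    intro j
    have : (fun x => fderiv ℝ (fun x' => f (x', z.2)) x (e2 j))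
        = fun x => DD (e2 j, 0) f (x, z.2) := by
      funext x
      exact partial_x_apply hf (x, z.2) (e2 j)
    rw [this, partial_x_apply (hf.DD _)]
  rw [lapx, Fin.sum_univ_two, key, key]

lemma pointwise_K {R : ℝ} (hR : 0 < R) {f : E2 × E2 → ℂ} (hf : Good f) (z : E2 × E2) :
    ‖fderiv ℝ (fun x => f (x, z.2)) z.1 (K R (z.1 - z.2))‖ ^ 2 ≤
      2 * (1 / (R ^ 2 + ((z.1 0 - z.2 0) ^ 2 + (z.1 1 - z.2 1) ^ 2)) * ‖DD (e2 0, 0) f z‖ ^ 2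
        + 1 / (R ^ 2 + ((z.1 0 - z.2 0) ^ 2 + (z.1 1 - z.2 1) ^ 2)) * ‖DD (e2 1, 0) f z‖ ^ 2) := by
  have hK := K_sq_le hR (z.1 - z.2)
  simp only [PiLp.sub_apply] at hK
  set k := K R (z.1 - z.2) with hk
  rw [vec_decomp k, map_add, map_smul, map_smul, partial_x_apply hf, partial_x_apply hf]
  set d0 := DD (e2 0, 0) f z
  set d1 := DD (e2 1, 0) f z
  have h1 : ‖k 0 • d0 + k 1 • d1‖ ≤ |k 0| * ‖d0‖ + |k 1| * ‖d1‖ := by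
    refine (norm_add_le _ _).trans ?_
    rw [norm_smul, norm_smul, Real.norm_eq_abs, Real.norm_eq_abs]
  have h2 : ‖k 0 • d0 + k 1 • d1‖ ^ 2 ≤ (k 0 ^ 2 + k 1 ^ 2) * (‖d0‖ ^ 2 + ‖d1‖ ^ 2) := by
    calc _ ≤ (|k 0| * ‖d0‖ + |k 1| * ‖d1‖) ^ 2 := by gcongr
      _ ≤ _ := by
        rw [← sq_abs (k 0), ← sq_abs (k 1)]
        nlinarith [sq_nonneg (|k 0| * ‖d1‖ - |k 1| * ‖d0‖)]
  have h3 := mul_le_mul_of_nonneg_right hK (by positivity : 0 ≤ ‖d0‖ ^ 2 + ‖d1‖ ^ 2)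
  linarith

/-- The weight times a good function squared is integrable. -/
lemma weight_int {R : ℝ} (hR : 0 < R) {u : E2 × E2 → ℂ} (hu : Good u) :
    Integrable (fun z : E2 × E2 =>
      1 / (R ^ 2 + ((z.1 0 - z.2 0) ^ 2 + (z.1 1 - z.2 1) ^ 2)) * ‖u z‖ ^ 2) := by
  apply Continuous.integrable_of_hasCompactSupport
  · refine Continuous.mul (Continuous.div continuous_const (by fun_prop) ?_)
      (hu.continuous.norm.pow 2)
    intro z
    positivity
  · refine hu.2.mono ?_
    intro z hz
    simp only [Function.mem_support] at hz ⊢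
    intro h0
    exact hz (by simp [h0])

/-- Coordinates of `x - y`. -/
def aa (i : Fin 2) : E2 × E2 →L[ℝ] ℝ :=
  (EuclideanSpace.proj i : E2 →L[ℝ] ℝ).comp
    (ContinuousLinearMap.fst ℝ E2 E2 - ContinuousLinearMap.snd ℝ E2 E2)

lemma aa_apply (i : Fin 2) (z : E2 × E2) : aa i z = z.1 i - z.2 i := by simp [aa]

lemma hardy_x {R : ℝ} (hR : 0 < R) (hR1 : R < Real.exp (-1)) {u : E2 × E2 → ℂ} (hu : Good u) :
    ∫ z : E2 × E2, 1 / (R ^ 2 + ((z.1 0 - z.2 0) ^ 2 + (z.1 1 - z.2 1) ^ 2)) * ‖u z‖ ^ 2 ≤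
      16 * (-Real.log R) ^ 2 *
        ∫ z, (‖u z‖ ^ 2 + ‖DD (e2 0, 0) u z‖ ^ 2 + ‖DD (e2 1, 0) u z‖ ^ 2) := by
  have h := hardy hR hR1 hu aa (fun k => (e2 k, 0)) (by
    intro i k
    simp [aa_apply, e2, Pi.single_apply])
  simpa only [aa_apply] using h

lemma hardy_y {R : ℝ} (hR : 0 < R) (hR1 : R < Real.exp (-1)) {u : E2 × E2 → ℂ} (hu : Good u) :
    ∫ z : E2 × E2, 1 / (R ^ 2 + ((z.1 0 - z.2 0) ^ 2 + (z.1 1 - z.2 1) ^ 2)) * ‖u z‖ ^ 2 ≤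
      16 * (-Real.log R) ^ 2 *
        ∫ z, (‖u z‖ ^ 2 + ‖DD (0, e2 0) u z‖ ^ 2 + ‖DD (0, e2 1) u z‖ ^ 2) := by
  have h := hardy hR hR1 hu (fun i => -aa i) (fun k => (0, e2 k)) (by
    intro i k
    simp [aa_apply, e2, Pi.single_apply])
  simpa only [neg_apply, aa_apply, neg_sq] using h

lemma Q_le {R : ℝ} (hR : 0 < R) {f : E2 × E2 → ℂ} (hf : Good f) :
    4 * ∫ z : E2 × E2, ‖fderiv ℝ (fun x => f (x, z.2)) z.1 (K R (z.1 - z.2))‖ ^ 2 ≤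
      8 * ((∫ z : E2 × E2, 1 / (R ^ 2 + ((z.1 0 - z.2 0) ^ 2 + (z.1 1 - z.2 1) ^ 2)) *
            ‖DD (e2 0, 0) f z‖ ^ 2)
        + ∫ z : E2 × E2, 1 / (R ^ 2 + ((z.1 0 - z.2 0) ^ 2 + (z.1 1 - z.2 1) ^ 2)) *
            ‖DD (e2 1, 0) f z‖ ^ 2) := by
  have I0 := weight_int hR (hf.DD (e2 0, 0))
  have I1 := weight_int hR (hf.DD (e2 1, 0))
  have h : ∫ z : E2 × E2, ‖fderiv ℝ (fun x => f (x, z.2)) z.1 (K R (z.1 - z.2))‖ ^ 2 ≤ _ :=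
    integral_mono_of_nonneg (Filter.Eventually.of_forall fun z => sq_nonneg _)
    ((I0.add I1).const_mul 2)
    (Filter.Eventually.of_forall fun z => pointwise_K hR hf z)
  rw [integral_const_mul, integral_add' I0 I1] at h
  linarith

lemma T_int {u : E2 × E2 → ℂ} (hu : Good u) (v w : E2 × E2) :
    ∫ z, (‖u z‖ ^ 2 + ‖DD v u z‖ ^ 2 + ‖DD w u z‖ ^ 2) =
      (∫ z, ‖u z‖ ^ 2) + (∫ z, ‖DD v u z‖ ^ 2) + ∫ z, ‖DD w u z‖ ^ 2 := by
  have h0 := integrable_sq_good hu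
  have h1 := integrable_sq_good (hu.DD v)
  have h2 := integrable_sq_good (hu.DD w)
  have h01 : Integrable (fun z => ‖u z‖ ^ 2 + ‖DD v u z‖ ^ 2) := h0.add h1
  rw [integral_add h01 h2, integral_add h0 h1]

lemma norm_e2 (j : Fin 2) : ‖e2 j‖ = 1 := by simp [e2]

lemma clm_sq_int {W : Type*} [NormedAddCommGroup W] [NormedSpace ℝ W]
    {H : E2 × E2 → (E2 →L[ℝ] W)} (hHC : Continuous H) (hHS : HasCompactSupport H) :
    Integrable (fun z => ‖H z‖ ^ 2) := by
  apply Continuous.integrable_of_hasCompactSupport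
  · exact hHC.norm.pow 2
  · refine hHS.mono fun z hz h0 => hz ?_
    simp only [h0]
    simp

/-- Bound for the second right-hand side. -/
lemma mixed_bound {f : E2 × E2 → ℂ} (hf : Good f) (j : Fin 2) :
    ∫ z, (‖DD (e2 j, 0) f z‖ ^ 2 + ‖DD (0, e2 0) (DD (e2 j, 0) f) z‖ ^ 2
        + ‖DD (0, e2 1) (DD (e2 j, 0) f) z‖ ^ 2) ≤
      2 * ∫ z : E2 × E2, (‖fderiv ℝ (fun x => f (x, z.2)) z.1‖ ^ 2 +
          ‖fderiv ℝ (fun y => fderiv ℝ (fun x => f (x, y)) z.1) z.2‖ ^ 2) := by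
  set G : E2 × E2 → (E2 →L[ℝ] ℂ) :=
    fun z => (fderiv ℝ f z).comp (ContinuousLinearMap.inl ℝ E2 E2) with hG
  have hGC : ContDiff ℝ (⊤ : ℕ∞) G :=
    (hf.1.fderiv_right (m := (⊤ : ℕ∞)) (by norm_cast)).clm_comp contDiff_const
  have hGS : HasCompactSupport G :=
    (hf.2.fderiv (𝕜 := ℝ)).comp_left
      (g := fun T : E2 × E2 →L[ℝ] ℂ => T.comp (ContinuousLinearMap.inl ℝ E2 E2)) (by simp)
  have hGd : Differentiable ℝ G := hGC.differentiable (by norm_num)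
  set H : E2 × E2 → (E2 →L[ℝ] (E2 →L[ℝ] ℂ)) :=
    fun z => (fderiv ℝ G z).comp (ContinuousLinearMap.inr ℝ E2 E2) with hH
  have hHC : Continuous H :=
    (hGC.continuous_fderiv (by norm_num)).clm_comp continuous_const
  have hHS : HasCompactSupport H :=
    (hGS.fderiv (𝕜 := ℝ)).comp_left
      (g := fun T : E2 × E2 →L[ℝ] (E2 →L[ℝ] ℂ) => T.comp (ContinuousLinearMap.inr ℝ E2 E2))
      (by simp)
  have e1 : ∀ z : E2 × E2, fderiv ℝ (fun x => f (x, z.2)) z.1 = G z := fun z => partial_x hf z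
  have e2' : ∀ z : E2 × E2,
      fderiv ℝ (fun y => fderiv ℝ (fun x => f (x, y)) z.1) z.2 = H z := by
    intro z
    have : (fun y => fderiv ℝ (fun x => f (x, y)) z.1) = fun y => G (z.1, y) := by
      funext y; exact e1 (z.1, y)
    rw [this]
    have h1 : HasFDerivAt G (fderiv ℝ G z) (z.1, z.2) := (hGd z).hasFDerivAt
    exact (h1.comp z.2 (hasFDerivAt_prodMk_right z.1 z.2)).fderiv
  have hDG : DD (e2 j, 0) f = fun z => G z (e2 j) := by
    funext z; simp [DD, hG]
  have hDH : ∀ k z, DD (0, e2 k) (DD (e2 j, 0) f) z = H z (e2 k) (e2 j) := by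
    intro k z
    rw [hDG]
    unfold DD
    rw [fderiv_clm_apply (hGd z) (differentiableAt_const _)]
    simp [hH]
  have IG : Integrable (fun z => ‖G z‖ ^ 2) := by
    apply Continuous.integrable_of_hasCompactSupport
    · exact hGC.continuous.norm.pow 2
    · refine hGS.mono fun z hz h0 => hz ?_
      simp only [h0]
      simp
  have IH : Integrable (fun z => ‖H z‖ ^ 2) := clm_sq_int hHC hHS
  clear_value H
  clear_value G
  simp_rw [e1, e2']
  rw [← integral_const_mul]
  apply integral_mono_of_nonneg
  · exact Filter.Eventually.of_forall fun z => by simp only [Pi.zero_apply]; positivity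
  · exact (IG.add IH).const_mul 2
  · refine Filter.Eventually.of_forall fun z => ?_
    simp only
    have b0 : ‖DD (e2 j, 0) f z‖ ≤ ‖G z‖ := by
      rw [hDG]
      have := (G z).le_opNorm (e2 j)
      rwa [norm_e2, mul_one] at this
    have b1 : ∀ k, ‖DD (0, e2 k) (DD (e2 j, 0) f) z‖ ≤ ‖H z‖ := by
      intro k
      rw [hDH]
      have := (H z).le_opNorm₂ (e2 k) (e2 j)
      rwa [norm_e2, norm_e2, mul_one, mul_one] at this
    have c0 : ‖DD (e2 j, 0) f z‖ ^ 2 ≤ ‖G z‖ ^ 2 := by gcongr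
    have c1 : ‖DD (0, e2 0) (DD (e2 j, 0) f) z‖ ^ 2 ≤ ‖H z‖ ^ 2 := by gcongr; exact b1 0
    have c2 : ‖DD (0, e2 1) (DD (e2 j, 0) f) z‖ ^ 2 ≤ ‖H z‖ ^ 2 := by gcongr; exact b1 1
    have := sq_nonneg ‖G z‖
    linarith

/-- Lemma 2.7 (mixed two-body term), quadratic-form version: there is `C > 0` such that
for all `0 < R < e⁻¹` and all smooth compactly supported `f : ℝ²×ℝ² → ℂ`, the quantity
`Q(f) = 4∬ |K_R(x−y)·∇ₓf(x,y)|²` is bounded both by `C|log R|² ∬ |f − Δₓf|²` and by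
`C|log R|² ∬ (‖∇ₓf‖² + ‖∇_y∇ₓf‖²)`. -/
theorem statement7 :
    ∃ C : ℝ, 0 < C ∧ ∀ R : ℝ, 0 < R → R < Real.exp (-1) →
      ∀ f : E2 × E2 → ℂ, ContDiff ℝ (⊤ : ℕ∞) f → HasCompactSupport f →
        (4 * ∫ z : E2 × E2, ‖fderiv ℝ (fun x => f (x, z.2)) z.1 (K R (z.1 - z.2))‖ ^ 2
            ≤ C * (-Real.log R) ^ 2 * ∫ z : E2 × E2, ‖f z - lapx f z‖ ^ 2) ∧
        (4 * ∫ z : E2 × E2, ‖fderiv ℝ (fun x => f (x, z.2)) z.1 (K R (z.1 - z.2))‖ ^ 2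
            ≤ C * (-Real.log R) ^ 2 *
                ∫ z : E2 × E2,
                  (‖fderiv ℝ (fun x => f (x, z.2)) z.1‖ ^ 2 +
                    ‖fderiv ℝ (fun y => fderiv ℝ (fun x => f (x, y)) z.1) z.2‖ ^ 2)) := by
  refine ⟨512, by norm_num, ?_⟩
  intro R hR hR1 f hfC hfS
  have hf : Good f := ⟨hfC, hfS⟩
  have hQ := Q_le hR hf
  have hP : 0 ≤ (-Real.log R) ^ 2 := sq_nonneg _
  refine ⟨hQ.trans ?_, hQ.trans ?_⟩
  · have h0 := hardy_x hR hR1 (hf.DD (e2 0, 0))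
    have h1 := hardy_x hR hR1 (hf.DD (e2 1, 0))
    have hE := elliptic hf (e2 0, 0) (e2 1, 0)
    rw [T_int (hf.DD _)] at h0 h1
    rw [DD_comm hf (e2 1, 0) (e2 0, 0)] at h0
    simp_rw [lapx_eq hf]
    have hE2 := mul_le_mul_of_nonneg_left hE hP
    have hn := mul_nonneg hP (le_trans (by positivity) hE)
    linarith
  · have h0 := hardy_y hR hR1 (hf.DD (e2 0, 0))
    have h1 := hardy_y hR hR1 (hf.DD (e2 1, 0))
    have m0 := mul_le_mul_of_nonneg_left (mixed_bound hf 0) hP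
    have m1 := mul_le_mul_of_nonneg_left (mixed_bound hf 1) hP
    linarith
end
end

section
/- There exists a constant C > 0 (independent of R) such that for every R ≥ 0 and every smooth compactly supported f : ℝ² × ℝ² × ℝ² → ℂ that is symmetric under permutations of its three ℝ²-arguments, one has 0 ≤ ∭_{(ℝ²)³} K_R(x − y) · K_R(x − z) |f(x,y,z)|² dx dy dz ≤ C ∭_{(ℝ²)³} ( |f(x,y,z)|² + ‖∇_x f(x,y,z)‖² ) dx dy dz, where ∇_x is the gradient in the first variable. (Equivalently, as operators on symmetric L²(ℝ⁶), 0 ≤ ∇^⊥w_R(x−y)·∇^⊥w_R(x−z) ≤ C(1 − Δ_x).) -/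
noncomputable section
open MeasureTheory ENNReal
open scoped RealInnerProductSpace

def Sf (R p q r : ℝ) : ℝ := (max R r)⁻¹ * (max R q)⁻¹ * ((r+q-p)/2) + (max R p)⁻¹ * (max R r)⁻¹ * ((p+r-q)/2) + (max R q)⁻¹ * (max R p)⁻¹ * ((q+p-r)/2)

lemma Sf_sorted (R p q r : ℝ) (hR : 0 ≤ R) (hr : 0 ≤ r) (hqr : r ≤ q) (hpq : q ≤ p)
    (hH : 0 ≤ 2*p*q+2*q*r+2*r*p-p^2-q^2-r^2) : 0 ≤ Sf R p q r ∧ Sf R p q r * (p+q+r) ≤ 24 := by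
  unfold Sf
  rcases (hr.trans hqr).eq_or_lt with hq | hq
  · have hr0 : r = 0 := le_antisymm (hq ▸ hqr) hr
    subst hq; subst hr0
    have : p = 0 := by nlinarith
    subst this
    norm_num
  have hp : 0 < p := hq.trans_le hpq
  have h4 : p ≤ 2 * (q + r) := by
    by_contra h
    push Not at h
    nlinarith [mul_pos hp (sub_pos.2 h), sq_nonneg (q-r)]
  have hPp : p ≤ max R p := le_max_right _ _
  have hQq : q ≤ max R q := le_max_right _ _
  have hTr : r ≤ max R r := le_max_right _ _
  have hPQ : max R q ≤ max R p := max_le_max_left _ hpq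
  have hP0 : p ≤ R → max R p = R ∧ max R q = R ∧ max R r = R := fun h =>
    ⟨max_eq_left h, max_eq_left (hpq.trans h), max_eq_left (hqr.trans (hpq.trans h))⟩
  have hP1 : R ≤ p → max R p = p := max_eq_right
  rcases (hR.trans (le_max_left R r)).eq_or_lt with hT | hT
  · have hr0 : r = 0 := le_antisymm (hT ▸ hTr) hr
    have hR0 : R = 0 := le_antisymm (hT ▸ le_max_left _ _) hR
    subst hr0; subst hR0
    have : p = q := by nlinarith [sq_nonneg (p-q)]
    subst this
    rw [max_eq_right hp.le]
    simp only [max_self]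
    constructor
    · have := inv_pos.2 hp
      have : 0 ≤ p⁻¹ * p⁻¹ * p := by positivity
      linarith
    · field_simp
      norm_num
      nlinarith [sq_nonneg p]
  · generalize max R p = P at *
    generalize max R q = Q at *
    generalize max R r = T at *
    have hP : 0 < P := by linarith
    have hQ : 0 < Q := by linarith
    have e : T⁻¹ * Q⁻¹ * ((r+q-p)/2) + P⁻¹ * T⁻¹ * ((p+r-q)/2) + Q⁻¹ * P⁻¹ * ((q+p-r)/2)
      = (P*(q+r-p)+Q*(p+r-q)+T*(p+q-r)) / (2*P*Q*T) := by
      field_simp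
      ring
    rw [e]
    constructor
    · apply div_nonneg _ (by positivity)
      rcases le_total p R with h | h
      · obtain ⟨h1, h2, h3⟩ := hP0 h
        rw [h1, h2, h3]
        nlinarith
      · rw [hP1 h]
        nlinarith [mul_nonneg (sub_nonneg.2 hQq) (by linarith : 0 ≤ p+r-q), mul_nonneg (sub_nonneg.2 hTr) (by linarith : 0 ≤ p+q-r)]
    · rw [div_mul_eq_mul_div, div_le_iff₀ (by positivity)]
      have h1 : P*(q+r-p)+Q*(p+r-q)+T*(p+q-r) ≤ 4 * (T*P) := by
        nlinarith [mul_nonneg (sub_nonneg.2 hPQ) (sub_nonneg.2 hpq), mul_le_mul hTr hPQ hQ.le hT.le, mul_le_mul_of_nonneg_right hTr hP.le, mul_le_mul_of_nonneg_left hPp hT.le, mul_nonneg hT.le (by linarith : 0 ≤ p-q+r)]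
      calc _ ≤ 4 * (T*P) * (p+q+r) := mul_le_mul_of_nonneg_right h1 (by linarith)
        _ ≤ 4 * (T*P) * (12*Q) := mul_le_mul_of_nonneg_left (by linarith) (by positivity)
        _ = _ := by ring

lemma Sf_bound (R p q r : ℝ) (hR : 0 ≤ R) (hp : 0 ≤ p) (hq : 0 ≤ q) (hr : 0 ≤ r)
    (hH : 0 ≤ 2*p*q+2*q*r+2*r*p-p^2-q^2-r^2) : 0 ≤ Sf R p q r ∧ Sf R p q r * (p+q+r) ≤ 24 := by
  have key : ∀ a b c : ℝ, 0 ≤ c → c ≤ b → b ≤ a → Sf R p q r = Sf R a b c → p+q+r = a+b+c →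
      2*p*q+2*q*r+2*r*p-p^2-q^2-r^2 = 2*a*b+2*b*c+2*c*a-a^2-b^2-c^2 → 
      0 ≤ Sf R p q r ∧ Sf R p q r * (p+q+r) ≤ 24 := by
    intro a b c hc hcb hba h1 h2 h3
    rw [h1, h2]
    exact Sf_sorted R a b c hR hc hcb hba (h3 ▸ hH)
  rcases le_total p q with h1 | h1 <;> rcases le_total q r with h2 | h2 <;> rcases le_total p r with h3 | h3
  · exact key r q p hp h1 h2 (by unfold Sf; ring) (by ring) (by ring)
  · exact key r q p hp h1 h2 (by unfold Sf; ring) (by ring) (by ring)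
  · exact key q r p hp h3 h2 (by unfold Sf; ring) (by ring) (by ring)
  · exact key q p r hr h3 h1 (by unfold Sf; ring) (by ring) (by ring)
  · exact key r p q hq h1 h3 (by unfold Sf; ring) (by ring) (by ring)
  · exact key p r q hq h2 h3 (by unfold Sf; ring) (by ring) (by ring)
  · exact key p q r hr h2 h1 (by unfold Sf; ring) (by ring) (by ring)
  · exact key p q r hr h2 h1 (by unfold Sf; ring) (by ring) (by ring)

instance haar2 : (volume : Measure (E2 × E2)).IsAddHaarMeasure :=
  MeasureTheory.Measure.prod.instIsAddHaarMeasure _ _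
instance haar3 : (volume : Measure (E2 × E2 × E2)).IsAddHaarMeasure :=
  MeasureTheory.Measure.prod.instIsAddHaarMeasure _ _

/-- sum of squared side lengths -/
def q0 (w : E2 × E2 × E2) : ℝ := ‖w.2.1 - w.2.2‖^2 + ‖w.2.2 - w.1‖^2 + ‖w.1 - w.2.1‖^2

def mv (w : E2 × E2 × E2) : E2 := (w.1 - w.2.1) + (w.1 - w.2.2)

lemma q0_nonneg (w) : 0 ≤ q0 w := by unfold q0; positivity
lemma q0_cont : Continuous q0 := by unfold q0; fun_prop
lemma mv_cont : Continuous mv := by unfold mv; fun_prop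

def Gp (ε : ℝ) (f : E2 × E2 × E2 → ℂ) (v : E2) (w : E2 × E2 × E2) : ℝ :=
  2 * ⟪f w, fderiv ℝ f w (v, 0)⟫ * (⟪mv w, v⟫ * (q0 w + ε)⁻¹) +
   ‖f w‖^2 * (2 * ⟪v, v⟫ * (q0 w + ε)⁻¹ - 2 * ⟪mv w, v⟫^2 * ((q0 w + ε)⁻¹)^2)

lemma int_of_supp (f : E2 × E2 × E2 → ℂ) (hc : HasCompactSupport f) (g : E2 × E2 × E2 → ℝ)
    (hg : Continuous g) (h : ∀ w, f w = 0 → g w = 0) : Integrable g := by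
  apply hg.integrable_of_hasCompactSupport
  exact hc.mono' (fun w hw => subset_tsupport _ (fun h' => hw (h w h')))

lemma Gp_int (ε : ℝ) (hε : 0 < ε) (f : E2 × E2 × E2 → ℂ) (hf : ContDiff ℝ (⊤ : ℕ∞) f)
    (hc : HasCompactSupport f) (v : E2) : Integrable (Gp ε f v) := by
  have hq := q0_cont
  have hm := mv_cont
  have hfc := hf.continuous
  have hd : Continuous (fun w => fderiv ℝ f w (v, 0)) :=
    (hf.continuous_fderiv (by simp)).clm_apply continuous_const
  have hi : Continuous (fun w => (q0 w + ε)⁻¹) :=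
    (hq.add continuous_const).inv₀ (fun w => by have := q0_nonneg w; exact (by linarith : 0 < q0 w + ε).ne')
  apply int_of_supp f hc
  · unfold Gp
    fun_prop
  · intro w hw
    simp [Gp, hw]

lemma Gp_integral (ε : ℝ) (hε : 0 < ε) (f : E2 × E2 × E2 → ℂ) (hf : ContDiff ℝ (⊤ : ℕ∞) f)
    (hc : HasCompactSupport f) (v : E2) : ∫ w, Gp ε f v w = 0 := by
  have hq := q0_cont
  have hm := mv_cont
  have hfc := hf.continuous
  have hi : Continuous (fun w => (q0 w + ε)⁻¹) :=
    (hq.add continuous_const).inv₀ (fun w => by have := q0_nonneg w; exact (by linarith : 0 < q0 w + ε).ne')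
  have hGi : Integrable (fun w => ‖f w‖^2 * (⟪mv w, v⟫ * (q0 w + ε)⁻¹)) := by
    apply int_of_supp f hc
    · fun_prop
    · intro w hw; simp [hw]
  have := integral_bilinear_hasLineDerivAt_right_eq_neg_left_of_integrable (μ := volume)
    (f := fun _ : E2 × E2 × E2 => (1:ℝ)) (f' := fun _ => 0)
    (g := fun w => ‖f w‖^2 * (⟪mv w, v⟫ * (q0 w + ε)⁻¹)) (g' := Gp ε f v)
    (B := ContinuousLinearMap.mul ℝ ℝ) (v := (v, 0)) (by simp)
    (by simpa using Gp_int ε hε f hf hc v) (by simpa using hGi)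
    (fun x _ => by unfold HasLineDerivAt; exact hasDerivAt_const _ _)
    (fun w _ => by
      unfold HasLineDerivAt
      have h1 : HasDerivAt (fun t : ℝ => f (w + t • (v, 0))) (fderiv ℝ f w (v,0)) 0 :=
        ((hf.differentiable (by simp) w).hasFDerivAt.hasLineDerivAt (v,0))
      have h2 := h1.norm_sq
      have a1 : HasDerivAt (fun t : ℝ => (w + t • ((v, 0) : E2 × E2 × E2)).1 - (w + t • ((v, 0) : E2 × E2 × E2)).2.1) v 0 := by
        simpa using (((hasDerivAt_id (0:ℝ)).smul_const v).const_add w.1).sub_const w.2.1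
      have a2 : HasDerivAt (fun t : ℝ => (w + t • ((v, 0) : E2 × E2 × E2)).1 - (w + t • ((v, 0) : E2 × E2 × E2)).2.2) v 0 := by
        simpa using (((hasDerivAt_id (0:ℝ)).smul_const v).const_add w.1).sub_const w.2.2
      have h3 : HasDerivAt (fun t : ℝ => ⟪mv (w + t • ((v, 0) : E2 × E2 × E2)), v⟫) (2 * ⟪v,v⟫) 0 := by
        have := (a1.add a2).inner ℝ (hasDerivAt_const (0:ℝ) v)
        refine (this.congr_deriv ?_)
        simp [inner_add_left]; ring
      have h4 : HasDerivAt (fun t : ℝ => q0 (w + t • ((v, 0) : E2 × E2 × E2)) + ε) (2 * ⟪mv w, v⟫) 0 := by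
        have := (((a1.norm_sq.add a2.norm_sq).const_add (‖w.2.1 - w.2.2‖^2)).add_const ε)
        refine HasDerivAt.congr_deriv (this.congr_of_eventuallyEq ?_) ?_
        · refine Filter.Eventually.of_forall fun t => ?_
          simp only [q0, Pi.add_apply]
          rw [norm_sub_rev (w + t • ((v, 0) : E2 × E2 × E2)).2.2]
          simp
          ring
        · simp [mv, inner_add_left]; ring
      have hne : q0 w + ε ≠ 0 := by have := q0_nonneg w; positivity
      have h5 := h4.fun_inv (by simpa using hne)
      have h6 := h2.mul (h3.mul h5)
      refine HasDerivAt.congr_deriv h6 ?_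
      have hw0 : w + (0:ℝ) • ((v, 0) : E2 × E2 × E2) = w := by simp
      simp only [Pi.mul_apply, hw0, Gp]
      field_simp
      ring)
  simpa using this

/-- partial derivative in first variable -/
def Lf (f : E2 × E2 × E2 → ℂ) (w : E2 × E2 × E2) : E2 →L[ℝ] ℂ :=
  (fderiv ℝ f w).comp (ContinuousLinearMap.inl ℝ E2 (E2 × E2))

lemma Lf_eq (f : E2 × E2 × E2 → ℂ) (hf : ContDiff ℝ (⊤ : ℕ∞) f) (w : E2 × E2 × E2) :
    fderiv ℝ (fun x => f (x, w.2)) w.1 = Lf f w := by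
  have h := (hf.differentiable (by simp) w).hasFDerivAt
  have h2 : HasFDerivAt (fun x : E2 => (x, w.2)) (ContinuousLinearMap.inl ℝ E2 (E2 × E2)) w.1 :=
    hasFDerivAt_prodMk_left w.1 w.2
  exact (HasFDerivAt.comp (g := f) w.1 h h2).fderiv

lemma Lf_int (f : E2 × E2 × E2 → ℂ) (hf : ContDiff ℝ (⊤ : ℕ∞) f)
    (hc : HasCompactSupport f) : Integrable (fun w => ‖Lf f w‖^2) := by
  have hd : Continuous (fun w => Lf f w) :=
    (hf.continuous_fderiv (by simp)).clm_comp continuous_const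
  apply Continuous.integrable_of_hasCompactSupport
  · fun_prop
  · apply (hc.fderiv (𝕜 := ℝ)).mono
    intro w hw h
    apply hw
    simp [Lf, h]

/-- weighted integrand -/
def Wf (ε : ℝ) (f : E2 × E2 × E2 → ℂ) (w : E2 × E2 × E2) : ℝ :=
  ‖f w‖^2 * (4 * (q0 w + ε)⁻¹ - 3 * ‖mv w‖^2 * ((q0 w + ε)⁻¹)^2)

lemma inv_cont (ε : ℝ) (hε : 0 < ε) : Continuous (fun w => (q0 w + ε)⁻¹) :=
    (q0_cont.add continuous_const).inv₀ (fun w => by have := q0_nonneg w; exact (by linarith : 0 < q0 w + ε).ne')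

lemma Wf_int (ε : ℝ) (hε : 0 < ε) (f : E2 × E2 × E2 → ℂ) (hf : ContDiff ℝ (⊤ : ℕ∞) f)
    (hc : HasCompactSupport f) : Integrable (Wf ε f) := by
  have hm := mv_cont
  have hfc := hf.continuous
  have hi := inv_cont ε hε
  apply int_of_supp f hc
  · unfold Wf
    fun_prop
  · intro w hw; simp [hw, Wf]

lemma Wf_le (ε : ℝ) (hε : 0 < ε) (f : E2 × E2 × E2 → ℂ) (w : E2 × E2 × E2) :
    Wf ε f w ≤ ‖Lf f w‖^2 + (Gp ε f (e2 0) w + Gp ε f (e2 1) w) := by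
  have hm : mv w = (mv w 0) • e2 0 + (mv w 1) • e2 1 := by
    ext j; fin_cases j <;> simp [e2]
  have hLm : Lf f w (mv w) = (mv w 0) • fderiv ℝ f w (e2 0, 0) + (mv w 1) • fderiv ℝ f w (e2 1, 0) := by
    conv_lhs => rw [hm]
    simp only [map_add, map_smul]
    rfl
  have hn : ‖mv w‖^2 = (mv w 0)^2 + (mv w 1)^2 := by
    simp [EuclideanSpace.norm_sq_eq, Fin.sum_univ_two]
  have i0 : ⟪mv w, e2 0⟫ = mv w 0 := by simp [e2, EuclideanSpace.inner_single_right]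
  have i1 : ⟪mv w, e2 1⟫ = mv w 1 := by simp [e2, EuclideanSpace.inner_single_right]
  have j0 : ⟪e2 0, e2 0⟫ = 1 := by simp [e2]
  have j1 : ⟪e2 1, e2 1⟫ = 1 := by simp [e2]
  have hin : ⟪f w, Lf f w (mv w)⟫ = ⟪f w, fderiv ℝ f w (e2 0, 0)⟫ * mv w 0 + ⟪f w, fderiv ℝ f w (e2 1, 0)⟫ * mv w 1 := by
    rw [hLm, inner_add_right, real_inner_smul_right, real_inner_smul_right]; ring
  have hb : -(‖f w‖ * (‖Lf f w‖ * ‖mv w‖)) ≤ ⟪f w, Lf f w (mv w)⟫ := by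
    have h1 := abs_real_inner_le_norm (f w) (Lf f w (mv w))
    have h2 := mul_le_mul_of_nonneg_left ((Lf f w).le_opNorm (mv w)) (norm_nonneg (f w))
    have := neg_abs_le ⟪f w, Lf f w (mv w)⟫
    linarith
  have hq : 0 ≤ (q0 w + ε)⁻¹ := by have := q0_nonneg w; exact inv_nonneg.2 (by linarith)
  have e : Gp ε f (e2 0) w + Gp ε f (e2 1) w = 2 * ⟪f w, Lf f w (mv w)⟫ * (q0 w + ε)⁻¹
     + ‖f w‖^2 * (4 * (q0 w + ε)⁻¹ - 2 * ‖mv w‖^2 * ((q0 w + ε)⁻¹)^2) := by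
    unfold Gp
    rw [i0, i1, j0, j1, hin, hn]
    ring
  rw [e]
  unfold Wf
  have hb2 := mul_le_mul_of_nonneg_right hb hq
  nlinarith [sq_nonneg (‖Lf f w‖ - ‖f w‖ * ‖mv w‖ * (q0 w + ε)⁻¹)]

lemma Wf_integral (ε : ℝ) (hε : 0 < ε) (f : E2 × E2 × E2 → ℂ) (hf : ContDiff ℝ (⊤ : ℕ∞) f)
    (hc : HasCompactSupport f) : ∫ w, Wf ε f w ≤ ∫ w, ‖Lf f w‖^2 := by
  have hL := Lf_int f hf hc
  have h0 := Gp_int ε hε f hf hc (e2 0)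
  have h1 := Gp_int ε hε f hf hc (e2 1)
  have h01 : Integrable (fun w => Gp ε f (e2 0) w + Gp ε f (e2 1) w) := h0.add h1
  have := integral_mono (Wf_int ε hε f hf hc) (hL.add h01) (Wf_le ε hε f)
  refine this.trans (le_of_eq ?_)
  simp only [Pi.add_apply]
  rw [integral_add hL h01, integral_add h0 h1,
    Gp_integral ε hε f hf hc, Gp_integral ε hε f hf hc]
  simp

/-- cyclic rotation -/
def cyc : E2 × E2 × E2 ≃ᵐ E2 × E2 × E2 :=
  (MeasurableEquiv.prodComm (α := E2) (β := E2 × E2)).trans MeasurableEquiv.prodAssoc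

lemma cyc_apply (w) : cyc w = (w.2.1, w.2.2, w.1) := rfl

lemma cyc_mp : MeasurePreserving cyc := by
  have h1 : MeasurePreserving (Prod.swap : E2 × (E2 × E2) → (E2 × E2) × E2) volume volume :=
    Measure.measurePreserving_swap
  have h2 : MeasurePreserving (MeasurableEquiv.prodAssoc : (E2 × E2) × E2 ≃ᵐ _) volume volume :=
    measurePreserving_prodAssoc volume volume volume
  exact h2.comp h1

lemma int_cyc (g : E2 × E2 × E2 → ℝ) : ∫ w, g (cyc w) = ∫ w, g w :=
  cyc_mp.integral_comp' g

lemma integrable_cyc (g : E2 × E2 × E2 → ℝ) (h : Integrable g) : Integrable (fun w => g (cyc w)) :=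
  cyc_mp.integrable_comp_of_integrable h

lemma int_sum_cyc (g : E2 × E2 × E2 → ℝ) (h : Integrable g) :
    Integrable (fun w => g w + g (cyc w) + g (cyc (cyc w))) ∧ 
    ∫ w, (g w + g (cyc w) + g (cyc (cyc w))) = 3 * ∫ w, g w := by
  have h1 := integrable_cyc g h
  have h2 := integrable_cyc _ h1
  have h01 : Integrable (fun w => g w + g (cyc w)) := h.add h1
  refine ⟨h01.add h2, ?_⟩
  rw [integral_add h01 h2, integral_add h h1, int_cyc (fun w => g (cyc w)), int_cyc]
  ring

lemma q0_cyc (w) : q0 (cyc w) = q0 w := by simp only [q0, cyc_apply]; ring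

lemma mv_sum (w) : ‖mv w‖^2 + ‖mv (cyc w)‖^2 + ‖mv (cyc (cyc w))‖^2 = 3 * q0 w := by
  simp [mv, cyc_apply, q0, EuclideanSpace.norm_sq_eq, Fin.sum_univ_two]
  ring

lemma hardy_s8 (ε : ℝ) (hε : 0 < ε) (f : E2 × E2 × E2 → ℂ) (hf : ContDiff ℝ (⊤ : ℕ∞) f)
    (hc : HasCompactSupport f) (hs : ∀ w, f (cyc w) = f w) :
    Integrable (fun w => ‖f w‖^2 * (q0 w + ε)⁻¹) ∧
    ∫ w, ‖f w‖^2 * (q0 w + ε)⁻¹ ≤ ∫ w, ‖Lf f w‖^2 := by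
  have hI : Integrable (fun w => ‖f w‖^2 * (q0 w + ε)⁻¹) := by
    have hfc := hf.continuous
    have hi := inv_cont ε hε
    apply int_of_supp f hc
    · fun_prop
    · intro w hw; simp [hw]
  refine ⟨hI, ?_⟩
  obtain ⟨h1, h2⟩ := int_sum_cyc _ (Wf_int ε hε f hf hc)
  have h3 := Wf_integral ε hε f hf hc
  have h4 := integral_mono (hI.const_mul 3) h1 (fun w => by
    have e : Wf ε f w + Wf ε f (cyc w) + Wf ε f (cyc (cyc w)) =
       ‖f w‖^2 * (12 * (q0 w + ε)⁻¹ - 9 * q0 w * ((q0 w + ε)⁻¹)^2) := by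
      have := mv_sum w
      simp only [Wf, hs, q0_cyc]
      linear_combination (-3 * ‖f w‖^2 * ((q0 w + ε)⁻¹)^2) * this
    show 3 * (‖f w‖^2 * (q0 w + ε)⁻¹) ≤ _
    rw [e]
    have hq : 0 < q0 w + ε := by have := q0_nonneg w; linarith
    have h5 : q0 w * ((q0 w + ε)⁻¹)^2 ≤ (q0 w + ε)⁻¹ := by
      have : q0 w * (q0 w + ε)⁻¹ ≤ 1 := by
        rw [← div_eq_mul_inv, div_le_one hq]; linarith
      nlinarith [inv_pos.2 hq]
    nlinarith [mul_le_mul_of_nonneg_left h5 (sq_nonneg ‖f w‖)])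
  rw [h2, integral_const_mul] at h4
  linarith

/-- three-body kernel -/
def Tk (R : ℝ) (w : E2 × E2 × E2) : ℝ := ⟪K R (w.1 - w.2.1), K R (w.1 - w.2.2)⟫

lemma K_inner (R : ℝ) (hR : 0 ≤ R) (u v : E2) :
    ⟪K R u, K R v⟫ = (max (R^2) (‖u‖^2))⁻¹ * (max (R^2) (‖v‖^2))⁻¹ * ⟪u, v⟫ := by
  have h : ∀ u : E2, max R ‖u‖ ^ 2 = max (R^2) (‖u‖^2) := by
    intro u
    rcases le_total R ‖u‖ with h | h
    · rw [max_eq_right h, max_eq_right (by gcongr)]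
    · rw [max_eq_left h, max_eq_left (by gcongr)]
  have hp : ⟪perp u, perp v⟫ = ⟪u, v⟫ := by
    simp [perp, PiLp.inner_apply, Fin.sum_univ_two]
    ring
  unfold K
  rw [h, h, real_inner_smul_left, real_inner_smul_right, hp]
  ring

lemma Tk_sum (R : ℝ) (hR : 0 ≤ R) (w) : Tk R w + Tk R (cyc w) + Tk R (cyc (cyc w)) =
    Sf (R^2) (‖w.2.1 - w.2.2‖^2) (‖w.2.2 - w.1‖^2) (‖w.1 - w.2.1‖^2) := by
  obtain ⟨x, y, z⟩ := w
  simp only [Tk, cyc_apply, K_inner R hR, Sf]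
  rw [norm_sub_rev x z, norm_sub_rev y x, norm_sub_rev z y]
  have e1 : ⟪x - y, x - z⟫ = (‖x-y‖^2 + ‖z-x‖^2 - ‖y-z‖^2)/2 := by
    simp [EuclideanSpace.norm_sq_eq, PiLp.inner_apply, Fin.sum_univ_two]; ring
  have e2 : ⟪y - z, y - x⟫ = (‖y-z‖^2 + ‖x-y‖^2 - ‖z-x‖^2)/2 := by
    simp [EuclideanSpace.norm_sq_eq, PiLp.inner_apply, Fin.sum_univ_two]; ring
  have e3 : ⟪z - x, z - y⟫ = (‖z-x‖^2 + ‖y-z‖^2 - ‖x-y‖^2)/2 := by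
    simp [EuclideanSpace.norm_sq_eq, PiLp.inner_apply, Fin.sum_univ_two]; ring
  rw [e1, e2, e3]

lemma Tk_bound (R : ℝ) (hR : 0 ≤ R) (w) :
    0 ≤ Tk R w + Tk R (cyc w) + Tk R (cyc (cyc w)) ∧
    (Tk R w + Tk R (cyc w) + Tk R (cyc (cyc w))) * q0 w ≤ 24 := by
  rw [Tk_sum R hR]
  apply Sf_bound _ _ _ _ (sq_nonneg _) (sq_nonneg _) (sq_nonneg _) (sq_nonneg _)
  obtain ⟨x, y, z⟩ := w
  have : 2*‖y-z‖^2*‖z-x‖^2 + 2*‖z-x‖^2*‖x-y‖^2+2*‖x-y‖^2*‖y-z‖^2-(‖y-z‖^2)^2-(‖z-x‖^2)^2-(‖x-y‖^2)^2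
     = 4 * ((y 0 - x 0) * (z 1 - x 1) - (y 1 - x 1) * (z 0 - x 0))^2 := by
    simp [EuclideanSpace.norm_sq_eq, Fin.sum_univ_two]; ring
  simp only
  rw [this]
  positivity

lemma main_bound (R : ℝ) (hR : 0 ≤ R) (f : E2 × E2 × E2 → ℂ) (hf : ContDiff ℝ (⊤ : ℕ∞) f)
    (hc : HasCompactSupport f) (hs : ∀ w, f (cyc w) = f w)
    (hI : Integrable (fun w => Tk R w * ‖f w‖^2)) :
    0 ≤ ∫ w, Tk R w * ‖f w‖^2 ∧ ∫ w, Tk R w * ‖f w‖^2 ≤ 8 * ∫ w, ‖Lf f w‖^2 := by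
  obtain ⟨h1, h2⟩ := int_sum_cyc _ hI
  simp only [hs, ← add_mul] at h1 h2
  set S : E2 × E2 × E2 → ℝ := fun w => Tk R w + Tk R (cyc w) + Tk R (cyc (cyc w)) with hS
  have hS0 : ∀ w, 0 ≤ S w := fun w => (Tk_bound R hR w).1
  have hS1 : ∀ w, S w * q0 w ≤ 24 := fun w => (Tk_bound R hR w).2
  have hSz : ∀ w, q0 w = 0 → S w = 0 := by
    rintro ⟨x, y, z⟩ h
    have hyz := sq_nonneg ‖y - z‖
    have hzx := sq_nonneg ‖z - x‖
    have hxy := sq_nonneg ‖x - y‖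
    simp only [q0] at h
    have a : ‖y - z‖^2 = 0 := by linarith
    have b : ‖z - x‖^2 = 0 := by linarith
    have c : ‖x - y‖^2 = 0 := by linarith
    simp only [hS]
    rw [Tk_sum R hR]
    simp only [a, b, c, Sf]
    simp
  have h1' : Integrable (fun w => S w * ‖f w‖^2) := h1
  have h2' : ∫ w, S w * ‖f w‖^2 = 3 * ∫ w, Tk R w * ‖f w‖^2 := h2
  constructor
  · have : 0 ≤ ∫ w, S w * ‖f w‖^2 := integral_nonneg fun w => mul_nonneg (hS0 w) (sq_nonneg _)
    linarith
  have hr : ∀ (n : ℕ) w, 0 ≤ q0 w * (q0 w + 1/((n:ℝ)+1))⁻¹ ∧ q0 w * (q0 w + 1/((n:ℝ)+1))⁻¹ ≤ 1 := by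
    intro n w
    have hq := q0_nonneg w
    have hn : 0 < 1/((n:ℝ)+1) := by positivity
    constructor
    · positivity
    · rw [← div_eq_mul_inv, div_le_one (by linarith)]; linarith
  have hqm : ∀ n : ℕ, Continuous (fun w => q0 w * (q0 w + 1/((n:ℝ)+1))⁻¹) := fun n =>
    q0_cont.mul (inv_cont _ (by positivity))
  have hFm : ∀ n : ℕ, AEStronglyMeasurable (fun w => (q0 w * (q0 w + 1/((n:ℝ)+1))⁻¹) * (S w * ‖f w‖^2)) volume :=
    fun n => (hqm n).aestronglyMeasurable.mul h1'.aestronglyMeasurable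
  have hFb : ∀ (n : ℕ) w, ‖(q0 w * (q0 w + 1/((n:ℝ)+1))⁻¹) * (S w * ‖f w‖^2)‖ ≤ S w * ‖f w‖^2 := by
    intro n w
    have h0 : 0 ≤ S w * ‖f w‖^2 := mul_nonneg (hS0 w) (sq_nonneg _)
    rw [Real.norm_of_nonneg (mul_nonneg (hr n w).1 h0)]
    exact mul_le_of_le_one_left h0 (hr n w).2
  have hlim := tendsto_integral_of_dominated_convergence (μ := volume) (f := fun w => S w * ‖f w‖^2)
    (F := fun (n : ℕ) w => (q0 w * (q0 w + 1/((n:ℝ)+1))⁻¹) * (S w * ‖f w‖^2))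
    (fun w => S w * ‖f w‖^2) hFm h1' (fun n => Filter.Eventually.of_forall (hFb n))
    (Filter.Eventually.of_forall fun w => by
      rcases eq_or_ne (q0 w) 0 with h | h
      · simp [hSz w h]
      · have t1 : Filter.Tendsto (fun n : ℕ => q0 w * (q0 w + 1/((n:ℝ)+1))⁻¹) Filter.atTop (nhds (q0 w * (q0 w + 0)⁻¹)) :=
          ((tendsto_one_div_add_atTop_nhds_zero_nat.const_add (q0 w)).inv₀ (by simpa using h)).const_mul _
        have := t1.mul_const (S w * ‖f w‖^2)
        simpa [h] using this)
  have hle : ∫ w, S w * ‖f w‖^2 ≤ 24 * ∫ w, ‖Lf f w‖^2 := by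
    refine le_of_tendsto' hlim fun n => ?_
    have hn : 0 < 1/((n:ℝ)+1) := by positivity
    obtain ⟨a, b⟩ := hardy_s8 _ hn f hf hc hs
    have hi : Integrable (fun w => (q0 w * (q0 w + 1/((n:ℝ)+1))⁻¹) * (S w * ‖f w‖^2)) :=
      h1'.mono' (hFm n) (Filter.Eventually.of_forall (hFb n))
    have := integral_mono hi (a.const_mul 24) (fun w => by
      have hq := q0_nonneg w
      have h5 : 0 ≤ ‖f w‖^2 * (q0 w + 1/((n:ℝ)+1))⁻¹ := by positivity
      have := mul_le_mul_of_nonneg_right (hS1 w) h5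
      refine le_trans (le_of_eq ?_) this
      ring)
    rw [integral_const_mul] at this
    linarith
  linarith

/-- Lemma 2.8 (three-body term), quadratic-form version: there is `C > 0` (independent of
`R`) such that for every `R ≥ 0` and every smooth compactly supported
`f : ℝ²×ℝ²×ℝ² → ℂ` symmetric under permutations of its three arguments,
`0 ≤ ∭ K_R(x−y)·K_R(x−z) |f(x,y,z)|² ≤ C ∭ (|f|² + ‖∇ₓf‖²)`. -/
theorem statement8 :
    ∃ C : ℝ, 0 < C ∧ ∀ R : ℝ, 0 ≤ R →
      ∀ f : E2 × E2 × E2 → ℂ, ContDiff ℝ (⊤ : ℕ∞) f → HasCompactSupport f →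
        (∀ x y z : E2, f (x, y, z) = f (y, x, z)) →
        (∀ x y z : E2, f (x, y, z) = f (x, z, y)) →
        (0 ≤ ∫ w : E2 × E2 × E2, ⟪K R (w.1 - w.2.1), K R (w.1 - w.2.2)⟫ * ‖f w‖ ^ 2) ∧
        (∫ w : E2 × E2 × E2, ⟪K R (w.1 - w.2.1), K R (w.1 - w.2.2)⟫ * ‖f w‖ ^ 2
          ≤ C * ∫ w : E2 × E2 × E2,
              (‖f w‖ ^ 2 + ‖fderiv ℝ (fun x => f (x, w.2)) w.1‖ ^ 2)) := by
  refine ⟨8, by norm_num, fun R hR f hf hc h1 h2 => ?_⟩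
  have hs : ∀ w, f (cyc w) = f w := by
    rintro ⟨x, y, z⟩
    rw [cyc_apply]
    show f (y, z, x) = f (x, y, z)
    rw [h2 y z x, h1 y x z]
  simp only [Lf_eq f hf]
  have hL := Lf_int f hf hc
  have hf2 : Integrable (fun w => ‖f w‖^2) := by
    have hfc := hf.continuous
    apply int_of_supp f hc
    · fun_prop
    · intro w hw; simp [hw]
  rw [integral_add hf2 hL]
  have p1 : 0 ≤ ∫ w, ‖f w‖^2 := integral_nonneg fun w => sq_nonneg _
  have p2 : 0 ≤ ∫ w, ‖Lf f w‖^2 := integral_nonneg fun w => sq_nonneg _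
  change 0 ≤ ∫ w, Tk R w * ‖f w‖^2 ∧ ∫ w, Tk R w * ‖f w‖^2 ≤ _
  by_cases hI : Integrable (fun w => Tk R w * ‖f w‖^2)
  · obtain ⟨a, b⟩ := main_bound R hR f hf hc hs hI
    exact ⟨a, by linarith⟩
  · rw [integral_undef hI]
    exact ⟨le_rfl, by positivity⟩
end
end
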